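/- arXiv:2209.15394 — 7 statements merged into one kernel-verified Lean document; each statement's English description precedes it below -/
import Mathlib

section
/- Every nondegenerate dendrite is a topological fractal with witnessing number two, i.e., there exist two continuous self-maps f, g of the dendrite D such that {f, g} is topologically contractive and f(D) ∪ g(D) = D. -/
/-- A family `F` of self-maps of a metric space `X` is topologically contractive if for
every `ε > 0` there is `k` such that every composition of `k` maps from `F` has image of
diameter less than `ε`. -/
def TopContractive {X : Type*} [MetricSpace X] (F : Set (X → X)) : Prop :=
  ∀ ε > (0 : ℝ), ∃ k : ℕ, ∀ l : List (X → X), (∀ f ∈ l, f ∈ F) → l.length = k →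
    Metric.diam (Set.range (l.foldr (· ∘ ·) id)) < ε

/-!
By the Hahn–Mazurkiewicz construction any two points of the dendrite are joined by a path onto the
whole space, and every path between distinct points can be shortened to an arc. The dendrite
retracts onto such an arc `α`: a path onto the space that leaves the arc has to return where it
left, since otherwise it would close up to a circle; so one may stop it during its excursions. The
resulting retraction `r`, read in the parameter of the arc, is locally constant off the arc, hence
only countably many of its fibres are nontrivial and only finitely many of them are large.

Now walk along the arc and, at the foot of every nontrivial fibre, insert a copy of a path onto the
space, retracted to that fibre. Reserving for these detours disjoint time slots of total length
`1 / 3` gives a path `φ` from `[0, 1]` onto the dendrite for which `r ∘ φ` is `3 / 2`-Lipschitz. The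
two maps are the halves of `φ`, rescaled to `[0, 1]`, after `r`. Every composition of them passes
through `[0, 1]`, where one step contracts by the factor `3 / 4`.
-/

open Set Filter Topology unitInterval

/-! ### Paths onto Peano continua -/

section Chains

variable {X : Type*}

/-- `ChainThrough R E x y`: some `R`-chain leads from `x` to `y` and visits every point of `E`.
Chains are encoded as eventually constant sequences, so that no lengths have to be tracked. -/
def ChainThrough (R : X → X → Prop) (E : Set X) (x y : X) : Prop :=
  ∃ z : ℕ → X, z 0 = x ∧ (∀ j, R (z j) (z (j + 1))) ∧ (∀ᶠ j in atTop, z j = y) ∧ E ⊆ range z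

namespace ChainThrough

variable {R : X → X → Prop} {E E' : Set X} {x y w : X}

theorem of_rel (hR : ∀ x, R x x) (h : R x y) : ChainThrough R {x} x y := by
  refine ⟨fun j => if j = 0 then x else y, rfl, fun j => ?_, ?_, ?_⟩
  · by_cases hj : j = 0 <;> simp [hj, h, hR]
  · filter_upwards [eventually_ne_atTop 0] with j hj using if_neg hj
  · exact singleton_subset_iff.2 ⟨0, rfl⟩

theorem trans (h : ChainThrough R E x y) (h' : ChainThrough R E' y w) :
    ChainThrough R (E ∪ E') x w := by
  obtain ⟨z, rfl, hz, hzy, hE⟩ := h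
  obtain ⟨z', rfl, hz', hzw, hE'⟩ := h'
  obtain ⟨M, hM⟩ := eventually_atTop.1 hzy
  have hright (k : ℕ) : (fun j => if j < M then z j else z' (j - M)) (M + k) = z' k := by simp
  have hleft {j : ℕ} (hj : j ≤ M) : (fun j => if j < M then z j else z' (j - M)) j = z j := by
    rcases hj.lt_or_eq with hj | rfl
    · exact if_pos hj
    · simpa using (hM j le_rfl).symm
  refine ⟨fun j => if j < M then z j else z' (j - M), hleft (Nat.zero_le M), fun j => ?_, ?_, ?_⟩
  · rcases lt_or_ge j M with hj | hj
    · rw [hleft hj.le, hleft hj]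
      exact hz j
    · obtain ⟨k, rfl⟩ := Nat.exists_eq_add_of_le hj
      rw [hright, add_assoc, hright]
      exact hz' k
  · filter_upwards [eventually_ge_atTop M, (tendsto_sub_atTop_nat M).eventually hzw]
      with j hj hw
    rw [if_neg hj.not_gt, hw]
  · rintro e (he | he)
    · obtain ⟨j, rfl⟩ := hE he
      rcases le_total j M with hj | hj
      · exact ⟨j, hleft hj⟩
      · exact ⟨M, (hleft le_rfl).trans ((hM M le_rfl).trans (hM j hj).symm)⟩
    · obtain ⟨k, rfl⟩ := hE' he
      exact ⟨M + k, hright k⟩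

end ChainThrough

theorem chainThrough_of_eventually_nhds [TopologicalSpace X] [PreconnectedSpace X]
    {R : X → X → Prop} (hrefl : ∀ x, R x x) (hsymm : ∀ x y, R x y → R y x)
    (hR : ∀ x, ∀ᶠ y in 𝓝 x, R x y) {E : Set X} (hE : E.Finite) (x y : X) :
    ChainThrough R E x y := by
  have hstart (x y : X) : ChainThrough R {x} x y := by
    refine PreconnectedSpace.induction₂' (fun x y => ChainThrough R {x} x y) (fun x => ?_)
      ⟨fun a b c hab hbc => ?_⟩ x y
    · filter_upwards [hR x] with y hxy
      exact ⟨.of_rel hrefl hxy, .of_rel hrefl (hsymm x y hxy)⟩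
    · obtain ⟨z, h0, hz, hc, hr⟩ := hab.trans hbc
      exact ⟨z, h0, hz, hc, subset_union_left.trans hr⟩
  induction E, hE using Set.Finite.induction_on generalizing x with
  | empty =>
    obtain ⟨z, h0, hz, hy, -⟩ := hstart x y
    exact ⟨z, h0, hz, hy, empty_subset _⟩
  | @insert e E _ _ ih =>
    obtain ⟨z, h0, hz, hy, hr⟩ := (hstart x e).trans ((hstart e e).trans (ih e))
    exact ⟨z, h0, hz, hy, subset_union_right.trans hr⟩

end Chains

section SmallJoined

variable {X : Type*} [MetricSpace X] {ε δ : ℝ} {x y : X}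

/-- Two points are `ε`-joined if they lie in a common preconnected set of diameter at most `ε`. -/
def SmallJoined (ε : ℝ) (x y : X) : Prop :=
  ∃ S : Set X, IsPreconnected S ∧ x ∈ S ∧ y ∈ S ∧ ∀ u ∈ S, ∀ v ∈ S, dist u v ≤ ε

namespace SmallJoined

theorem refl (hε : 0 ≤ ε) (x : X) : SmallJoined ε x x :=
  ⟨{x}, isPreconnected_singleton, rfl, rfl, by rintro u rfl v rfl; simpa using hε⟩

theorem symm (h : SmallJoined ε x y) : SmallJoined ε y x :=
  let ⟨S, hS, hx, hy, hd⟩ := h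
  ⟨S, hS, hy, hx, hd⟩

theorem dist_le (h : SmallJoined ε x y) : dist x y ≤ ε :=
  let ⟨_, _, hx, hy, hd⟩ := h
  hd _ hx _ hy

theorem eventually [LocallyConnectedSpace X] (hε : 0 < ε) (x : X) :
    ∀ᶠ y in 𝓝 x, SmallJoined ε x y := by
  obtain ⟨V, hV, hVc, hVb⟩ := locallyConnectedSpace_iff_connected_subsets.1 ‹_› x _
    (Metric.ball_mem_nhds x (half_pos hε))
  filter_upwards [hV] with y hy
  refine ⟨V, hVc, mem_of_mem_nhds hV, hy, fun u hu v hv => ?_⟩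
  have hu := Metric.mem_ball.1 (hVb hu)
  have hv := Metric.mem_ball.1 (hVb hv)
  linarith [dist_triangle_right u v x]

theorem isPreconnected_star (x : X) : IsPreconnected {y | SmallJoined ε x y} :=
  isPreconnected_of_forall x fun _ ⟨S, hS, hx, hy, hd⟩ =>
    ⟨S, fun _ hv => ⟨S, hS, hx, hv, hd⟩, hx, hy, hS⟩

theorem exists_chain [LocallyConnectedSpace X] (hδ : 0 < δ) (h : SmallJoined ε x y)
    {E : Set X} (hE : E.Finite) :
    ∃ z : ℕ → X, z 0 = x ∧ (∀ᶠ j in atTop, z j = y) ∧ (∀ j, dist x (z j) ≤ ε) ∧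
      (∀ j, SmallJoined δ (z j) (z (j + 1))) ∧ ∀ e ∈ E, SmallJoined ε x e → ∃ j, z j = e := by
  let S : Set X := {y | SmallJoined ε x y}
  have : PreconnectedSpace S := Subtype.preconnectedSpace (isPreconnected_star x)
  have hx : x ∈ S := let ⟨T, hT, hxT, _, hd⟩ := h; ⟨T, hT, hxT, hxT, hd⟩
  obtain ⟨z, h0, hz, hy, hr⟩ := chainThrough_of_eventually_nhds (X := S)
    (R := fun u v => SmallJoined δ (u : X) v) (fun u => refl hδ.le _) (fun _ _ => symm)
    (fun u => continuous_subtype_val.continuousAt.eventually (eventually hδ (u : X)))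
    (hE.preimage Subtype.val_injective.injOn) ⟨x, hx⟩ ⟨y, h⟩
  refine ⟨fun j => z j, congrArg Subtype.val h0, hy.mono fun j => congrArg Subtype.val,
    fun j => (z j).2.dist_le, hz, fun e he hxe => ?_⟩
  obtain ⟨j, hj⟩ := hr (show (⟨e, hxe⟩ : S) ∈ Subtype.val ⁻¹' E from he)
  exact ⟨j, congrArg Subtype.val hj⟩

theorem exists_finite_net [CompactSpace X] [LocallyConnectedSpace X] (hε : 0 < ε) :
    ∃ E : Set X, E.Finite ∧ ∀ y, ∃ e ∈ E, SmallJoined ε e y := by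
  obtain ⟨s, hs⟩ := CompactSpace.elim_nhds_subcover (fun x : X => {y | SmallJoined ε x y})
    fun x => eventually hε x
  refine ⟨s, s.finite_toSet, fun y => ?_⟩
  simpa using (hs ▸ mem_univ y : y ∈ ⋃ x ∈ s, {y | SmallJoined ε x y})

end SmallJoined

end SmallJoined

section Walks

/-- An `ε`-walk in `X` moves by `ε`-joined steps and its initial segment up to `length` is an
`ε`-net: a discrete approximation of a path onto `X`. -/
structure Walk (X : Type*) [MetricSpace X] (ε : ℝ) where
  toFun : ℕ → X
  length : ℕ
  length_pos : 0 < length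
  step (i : ℕ) : SmallJoined ε (toFun i) (toFun (i + 1))
  dense (y : X) : ∃ i < length, SmallJoined ε (toFun i) y

namespace Walk

variable {X : Type*} [MetricSpace X] {ε δ : ℝ}

/-- The step function on `[0, 1]` that runs through a walk at constant speed. -/
noncomputable def stepFun (p : Walk X ε) (t : I) : X :=
  p.toFun ⌊(t : ℝ) * p.length⌋₊

@[simp]
theorem stepFun_zero (p : Walk X ε) : p.stepFun 0 = p.toFun 0 := by simp [stepFun]

@[simp]
theorem stepFun_one (p : Walk X ε) : p.stepFun 1 = p.toFun p.length := by simp [stepFun]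

theorem exists_dist_stepFun_le (p : Walk X ε) (y : X) : ∃ t, dist (p.stepFun t) y ≤ ε := by
  obtain ⟨i, hi, hy⟩ := p.dense y
  have hN : (p.length : ℝ) ≠ 0 := Nat.cast_ne_zero.2 p.length_pos.ne'
  refine ⟨⟨i / p.length, by positivity, div_le_one_of_le₀ (mod_cast hi.le) (by positivity)⟩, ?_⟩
  simpa [stepFun, div_mul_cancel₀ _ hN] using hy.dist_le

theorem dist_stepFun_le_of_le (p : Walk X ε) {s t : I} (hst : s ≤ t)
    (h : ((t : ℝ) - s) * p.length < 1) : dist (p.stepFun s) (p.stepFun t) ≤ ε := by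
  have hle : ⌊(s : ℝ) * p.length⌋₊ ≤ ⌊(t : ℝ) * p.length⌋₊ := by gcongr
  have hlt : ⌊(t : ℝ) * p.length⌋₊ ≤ ⌊(s : ℝ) * p.length⌋₊ + 1 := by
    rw [← Nat.floor_add_one (mul_nonneg s.2.1 (Nat.cast_nonneg _))]
    exact Nat.floor_le_floor (by linarith)
  rcases hle.eq_or_lt with heq | hlt'
  · simpa [stepFun, heq] using dist_nonneg.trans (p.step 0).dist_le
  · simpa [stepFun, le_antisymm hlt hlt'] using (p.step ⌊(s : ℝ) * p.length⌋₊).dist_le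

theorem eventually_dist_stepFun_le (p : Walk X ε) (t : I) :
    ∀ᶠ s in 𝓝 t, dist (p.stepFun s) (p.stepFun t) ≤ ε := by
  have hN : (0 : ℝ) < p.length := Nat.cast_pos.2 p.length_pos
  filter_upwards [Metric.ball_mem_nhds t (inv_pos.2 hN)] with s hs
  have hs : |(s : ℝ) - t| * p.length < 1 := by
    rw [← lt_div_iff₀ hN, one_div]
    exact hs
  rcases le_total s t with hst | hst
  · exact p.dist_stepFun_le_of_le hst
      (by rwa [abs_sub_comm, abs_of_nonneg (sub_nonneg.2 (by exact hst))] at hs)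
  · rw [dist_comm]
    exact p.dist_stepFun_le_of_le hst
      (by rwa [abs_of_nonneg (sub_nonneg.2 (by exact hst))] at hs)

end Walk

theorem exists_common_stage {X : Type*} {z : ℕ → ℕ → X} {y : ℕ → X}
    (hz : ∀ i, ∀ᶠ j in atTop, z i j = y i) (N : ℕ) :
    ∃ M, ∀ i < N, z i (M + 1) = y i ∧ ∀ j, ∃ k ≤ M, z i k = z i j := by
  have hall : ∀ᶠ j in atTop, ∀ i < N, z i j = y i :=
    (eventually_all_finite (finite_lt_nat N)).2 fun i _ => hz i
  obtain ⟨M, hM⟩ := eventually_atTop.1 hall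
  refine ⟨M, fun i hi => ⟨hM _ M.le_succ i hi, fun j => ?_⟩⟩
  rcases le_total j M with hj | hj
  · exact ⟨j, hj, rfl⟩
  · exact ⟨M, le_rfl, (hM M le_rfl i hi).trans (hM j hj i hi).symm⟩

/-- The first `L` terms of `z 0`, followed by the first `L` terms of `z 1`, and so on. -/
def concat {X : Type*} (z : ℕ → ℕ → X) (L j : ℕ) : X :=
  z (j / L) (j % L)

theorem concat_mul_add {X : Type*} {z : ℕ → ℕ → X} {L i k : ℕ} (hL : 0 < L) (hk : k ≤ L)
    (hi : z i L = z (i + 1) 0) : concat z L (i * L + k) = z i k := by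
  rcases hk.eq_or_lt with rfl | hk
  · rw [hi, concat, ← Nat.succ_mul, Nat.mul_div_cancel _ hL, Nat.mul_mod_left]
  · rw [concat, mul_comm, Nat.mul_add_div hL, Nat.div_eq_of_lt hk, Nat.mul_add_mod,
      Nat.mod_eq_of_lt hk, add_zero]

theorem floor_mul_natCast_div (t : ℝ) (N : ℕ) {L : ℕ} (hL : 0 < L) :
    ⌊t * (N * L : ℕ)⌋₊ / L = ⌊t * N⌋₊ := by
  rw [← Nat.floor_div_natCast, Nat.cast_mul, ← mul_assoc,
    mul_div_cancel_right₀ _ (Nat.cast_ne_zero.2 hL.ne')]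

theorem Walk.exists_refinement {X : Type*} [MetricSpace X] [CompactSpace X]
    [LocallyConnectedSpace X] {ε δ : ℝ} (p : Walk X ε) (hδ : 0 < δ) :
    ∃ q : Walk X δ, q.toFun 0 = p.toFun 0 ∧ q.toFun q.length = p.toFun p.length ∧
      ∀ t, dist (p.stepFun t) (q.stepFun t) ≤ ε := by
  obtain ⟨E, hE, hEd⟩ := SmallJoined.exists_finite_net (X := X) hδ
  choose z hz0 hzend hzε hzδ hzE using fun i => (p.step i).exists_chain hδ hE
  obtain ⟨M, hM⟩ := exists_common_stage hzend p.length
  set L := M + 1 with hLM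
  have hL : 0 < L := M.succ_pos
  have hcat {i k : ℕ} (hi : i < p.length) (hk : k ≤ L) : concat z L (i * L + k) = z i k :=
    concat_mul_add hL hk ((hM i hi).1.trans (hz0 _).symm)
  have hcat0 (i : ℕ) : concat z L (i * L) = p.toFun i := by simp [concat, hz0]
  let q : ℕ → X := fun j => concat z L (min j (p.length * L))
  have hq {j : ℕ} (hj : j ≤ p.length * L) : q j = concat z L j := by simp [q, hj]
  have hstep (j : ℕ) : SmallJoined δ (q j) (q (j + 1)) := by
    rcases lt_or_ge j (p.length * L) with hj | hj
    · have hi : j / L < p.length := Nat.div_lt_of_lt_mul (mul_comm L _ ▸ hj)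
      rw [hq hj.le, hq hj, ← Nat.div_add_mod' j L, hcat hi (Nat.mod_lt j hL).le,
        Nat.succ_eq_add_one, add_assoc, hcat hi (Nat.mod_lt j hL)]
      exact hzδ _ _
    · simpa [q, hj, hj.trans j.le_succ] using SmallJoined.refl hδ.le _
  have hdense (y : X) : ∃ i < p.length * L, SmallJoined δ (q i) y := by
    obtain ⟨e, he, hey⟩ := hEd y
    obtain ⟨i, hi, hie⟩ := p.dense e
    obtain ⟨j, rfl⟩ := hzE i e he hie
    obtain ⟨k, hk, hkj⟩ := (hM i hi).2 j
    have hlt : i * L + k < p.length * L := by nlinarith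
    exact ⟨_, hlt, by rwa [hq hlt.le, hcat hi (hk.trans M.le_succ), hkj]⟩
  refine ⟨⟨q, p.length * L, mul_pos p.length_pos hL, hstep, hdense⟩, ?_, ?_, fun t => ?_⟩
  · simpa using (hq (Nat.zero_le _)).trans (by simpa using hcat0 0)
  · exact (hq le_rfl).trans (hcat0 _)
  · have hle : ⌊(t : ℝ) * (p.length * L : ℕ)⌋₊ ≤ p.length * L :=
      Nat.floor_le_of_le (mul_le_of_le_one_left (Nat.cast_nonneg _) t.2.2)
    simpa only [stepFun, hq hle, concat, floor_mul_natCast_div _ _ hL] using hzε _ _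

theorem exists_continuous_limit {T X : Type*} [TopologicalSpace T] [MetricSpace X]
    [CompleteSpace X] {g : ℕ → T → X} {C : ℝ}
    (hg : ∀ n t, dist (g n t) (g (n + 1) t) ≤ C / 2 ^ n)
    (hgc : ∀ n t, ∀ᶠ s in 𝓝 t, dist (g n s) (g n t) ≤ C / 2 ^ n) :
    ∃ f : T → X, Continuous f ∧ (∀ t, Tendsto (g · t) atTop (𝓝 (f t))) ∧
      ∀ n t, dist (g n t) (f t) ≤ 2 * C / 2 ^ n := by
  have hg' (t : T) (n : ℕ) : dist (g n t) (g (n + 1) t) ≤ 2 * C / 2 / 2 ^ n := by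
    simpa using hg n t
  choose f hf using fun t => cauchySeq_tendsto_of_complete (cauchySeq_of_le_geometric_two (hg' t))
  have hdist (n : ℕ) (t : T) : dist (g n t) (f t) ≤ 2 * C / 2 ^ n :=
    dist_le_of_le_geometric_two_of_tendsto (hg' t) (hf t) n
  refine ⟨f, continuous_iff_continuousAt.2 fun t => Metric.tendsto_nhds.2 fun ε hε => ?_, hf, hdist⟩
  have hlim : Tendsto (fun n : ℕ => 5 * C / 2 ^ n) atTop (𝓝 0) :=
    tendsto_const_nhds.div_atTop (tendsto_pow_atTop_atTop_of_one_lt one_lt_two)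
  obtain ⟨n, hn⟩ := (hlim.eventually_lt_const hε).exists
  filter_upwards [hgc n t] with s hs
  calc dist (f s) (f t) ≤ dist (g n s) (f s) + dist (g n s) (g n t) + dist (g n t) (f t) := by
        simpa only [dist_comm (f s)] using dist_triangle4 (f s) (g n s) (g n t) (f t)
    _ ≤ 2 * C / 2 ^ n + C / 2 ^ n + 2 * C / 2 ^ n := add_le_add_three (hdist n s) hs (hdist n t)
    _ = 5 * C / 2 ^ n := by ring
    _ < ε := hn

section HahnMazurkiewicz

variable {X : Type*} [MetricSpace X] [CompactSpace X] [PreconnectedSpace X]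

theorem Walk.exists_initial (a b : X) :
    ∃ ε > 0, ∃ p : Walk X ε, p.toFun 0 = a ∧ p.toFun p.length = b := by
  have hjoined (x y : X) : SmallJoined (Metric.diam (univ : Set X) + 1) x y :=
    ⟨univ, isPreconnected_univ, trivial, trivial, fun u hu v hv =>
      (Metric.dist_le_diam_of_mem isCompact_univ.isBounded hu hv).trans (lt_add_one _).le⟩
  exact ⟨_, Metric.diam_nonneg.trans_lt (lt_add_one _),
    ⟨fun i => if i = 0 then a else b, 1, one_pos, fun _ => hjoined _ _,
      fun _ => ⟨0, one_pos, hjoined _ _⟩⟩, rfl, rfl⟩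

variable [LocallyConnectedSpace X]

theorem Walk.exists_seq (a b : X) :
    ∃ ε > 0, ∃ p : ∀ n : ℕ, Walk X (ε / 2 ^ n),
      (∀ n, (p n).stepFun 0 = a ∧ (p n).stepFun 1 = b) ∧
      ∀ n t, dist ((p n).stepFun t) ((p (n + 1)).stepFun t) ≤ ε / 2 ^ n := by
  obtain ⟨ε, hε, h₀⟩ := Walk.exists_initial a b
  rw [← div_one ε, ← pow_zero 2] at h₀
  obtain ⟨p₀, h₀a, h₀b⟩ := h₀
  choose next hnext0 hnext1 hdist using fun (n : ℕ) (p : Walk X (ε / 2 ^ n)) =>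
    p.exists_refinement (by positivity : 0 < ε / 2 ^ (n + 1))
  let p (n : ℕ) : Walk X (ε / 2 ^ n) := Nat.rec p₀ next n
  refine ⟨ε, hε, p, fun n => ?_, fun n t => hdist n (p n) t⟩
  rw [stepFun_zero, stepFun_one]
  induction n with
  | zero => exact ⟨h₀a, h₀b⟩
  | succ n ih => exact ⟨(hnext0 n (p n)).trans ih.1, (hnext1 n (p n)).trans ih.2⟩

theorem exists_surjective_path (a b : X) : ∃ ψ : Path a b, Function.Surjective ψ := by
  obtain ⟨ε, -, p, hends, hp⟩ := Walk.exists_seq a b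
  obtain ⟨ψ, hψ, hlim, hdist⟩ :=
    exists_continuous_limit hp fun n t => (p n).eventually_dist_stepFun_le t
  have hψ0 : ψ 0 = a :=
    tendsto_nhds_unique (hlim 0) (by simp only [(hends _).1, tendsto_const_nhds])
  have hψ1 : ψ 1 = b :=
    tendsto_nhds_unique (hlim 1) (by simp only [(hends _).2, tendsto_const_nhds])
  refine ⟨⟨⟨ψ, hψ⟩, hψ0, hψ1⟩, range_eq_univ.1 ?_⟩
  refine (isCompact_range hψ).isClosed.closure_eq.symm.trans (eq_univ_of_forall fun y => ?_)
  refine Metric.mem_closure_iff.2 fun η hη => ?_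
  have hzero : Tendsto (fun n : ℕ => 3 * ε / 2 ^ n) atTop (𝓝 0) :=
    tendsto_const_nhds.div_atTop (tendsto_pow_atTop_atTop_of_one_lt one_lt_two)
  obtain ⟨n, hn⟩ := (hzero.eventually_lt_const hη).exists
  obtain ⟨t, ht⟩ := (p n).exists_dist_stepFun_le y
  refine ⟨ψ t, mem_range_self t, ?_⟩
  calc dist y (ψ t) ≤ dist ((p n).stepFun t) y + dist ((p n).stepFun t) (ψ t) :=
        dist_triangle_left _ _ _
    _ ≤ ε / 2 ^ n + 2 * ε / 2 ^ n := add_le_add ht (hdist n t)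
    _ = 3 * ε / 2 ^ n := by ring
    _ < η := hn

end HahnMazurkiewicz

end Walks

/-! ### Arcs inside paths -/

theorem eventually_uIcc_subset {T : Type*} [LinearOrder T] [TopologicalSpace T] [OrderTopology T]
    {t : T} {U : Set T} (hU : U ∈ 𝓝 t) : ∀ᶠ s in 𝓝 t, uIcc s t ⊆ U :=
  (tendsto_id.uIcc tendsto_const_nhds).eventually (eventually_smallSets_subset.2 hU)

section LastPoint

variable {T : Type*} [CompleteLinearOrder T] {K K' : Set T} {s t u : T}

/-- The last point of `K` up to `t`; meaningful when `K` is closed and contains `⊥`. -/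
def lastPoint (K : Set T) (t : T) : T := sSup (K ∩ Iic t)

/-- The first point of `K` from `t` on; meaningful when `K` is closed and contains `⊤`. -/
def nextPoint (K : Set T) (t : T) : T := sInf (K ∩ Ici t)

theorem lastPoint_le (K : Set T) (t : T) : lastPoint K t ≤ t := sSup_le fun _ h => h.2

theorem le_nextPoint (K : Set T) (t : T) : t ≤ nextPoint K t := le_sInf fun _ h => h.2

theorem le_lastPoint (hs : s ∈ K) (hst : s ≤ t) : s ≤ lastPoint K t := le_sSup ⟨hs, hst⟩

theorem nextPoint_le (hs : s ∈ K) (hts : t ≤ s) : nextPoint K t ≤ s := sInf_le ⟨hs, hts⟩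

theorem lastPoint_of_mem (ht : t ∈ K) : lastPoint K t = t :=
  (lastPoint_le K t).antisymm (le_lastPoint ht le_rfl)

theorem lastPoint_mono (K : Set T) : Monotone (lastPoint K) := fun _ _ hst =>
  sSup_le_sSup (inter_subset_inter_right K (Iic_subset_Iic.2 hst))

theorem nextPoint_of_mem (ht : t ∈ K) : nextPoint K t = t :=
  (nextPoint_le ht le_rfl).antisymm (le_nextPoint K t)

theorem lastPoint_le_of_subset (h : K' ⊆ K) (t : T) : lastPoint K' t ≤ lastPoint K t :=
  sSup_le_sSup (inter_subset_inter_left _ h)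

theorem nextPoint_le_of_subset (h : K' ⊆ K) (t : T) : nextPoint K t ≤ nextPoint K' t :=
  sInf_le_sInf (inter_subset_inter_left _ h)

theorem lastPoint_eq_of_subset (h : K' ⊆ K) (ht : lastPoint K t ∈ K') :
    lastPoint K' t = lastPoint K t :=
  (lastPoint_le_of_subset h t).antisymm (le_lastPoint ht (lastPoint_le K t))

theorem nextPoint_eq_of_subset (h : K' ⊆ K) (ht : nextPoint K t ∈ K') :
    nextPoint K' t = nextPoint K t :=
  (nextPoint_le ht (le_nextPoint K t)).antisymm (nextPoint_le_of_subset h t)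

theorem lastPoint_eq_of_disjoint (h : Disjoint (Icc s t) K) (hst : s ≤ t) :
    lastPoint K s = lastPoint K t := by
  refine congrArg sSup (Subset.antisymm (fun u hu => ⟨hu.1, hu.2.trans hst⟩) fun u hu => ⟨hu.1, ?_⟩)
  exact le_of_not_ge fun hsu => h.notMem_of_mem_left ⟨hsu, hu.2⟩ hu.1

theorem lastPoint_eq_of_disjoint_uIcc (h : Disjoint (uIcc s t) K) :
    lastPoint K s = lastPoint K t := by
  rcases le_total s t with hst | hts
  · exact lastPoint_eq_of_disjoint (by rwa [uIcc_of_le hst] at h) hst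
  · exact (lastPoint_eq_of_disjoint (by rwa [uIcc_of_ge hts] at h) hts).symm

variable [TopologicalSpace T] [OrderTopology T]

theorem lastPoint_mem (hK : IsClosed K) (hbot : ⊥ ∈ K) (t : T) : lastPoint K t ∈ K :=
  have hne : (K ∩ Iic t).Nonempty := ⟨⊥, hbot, bot_le⟩
  ((hK.inter isClosed_Iic).sSup_mem hne).1

theorem nextPoint_mem (hK : IsClosed K) (htop : ⊤ ∈ K) (t : T) : nextPoint K t ∈ K :=
  have hne : (K ∩ Ici t).Nonempty := ⟨⊤, htop, le_top⟩
  ((hK.inter isClosed_Ici).sInf_mem hne).1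

theorem eventually_lastPoint_eq (hK : IsClosed K) (ht : t ∉ K) :
    ∀ᶠ s in 𝓝 t, lastPoint K s = lastPoint K t :=
  (eventually_uIcc_subset (hK.isOpen_compl.mem_nhds ht)).mono fun _ hs =>
    lastPoint_eq_of_disjoint_uIcc (subset_compl_iff_disjoint_right.1 hs)

end LastPoint

section GapConst

variable {T X : Type*} [CompleteLinearOrder T] [TopologicalSpace T]

/-- `γ` takes equal values at the two ends of every gap of the closed set `K`, so that it can be
made constant on the gaps. -/
structure IsGapConst (γ : T → X) (K : Set T) : Prop where
  isClosed : IsClosed K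
  bot_mem : ⊥ ∈ K
  top_mem : ⊤ ∈ K
  eq (t : T) : γ (lastPoint K t) = γ (nextPoint K t)

namespace IsGapConst

variable {γ : T → X} {K : Set T} {s t : T}

protected theorem univ (γ : T → X) : IsGapConst γ univ :=
  ⟨isClosed_univ, trivial, trivial, fun t => by
    rw [lastPoint_of_mem (mem_univ t), nextPoint_of_mem (mem_univ t)]⟩

theorem apply_lastPoint_mem (h : IsGapConst γ K) (ht : t ∈ K) (s : T) :
    γ (lastPoint K s) ∈ γ '' uIcc s t := by
  rcases le_total t s with hts | hst
  · exact mem_image_of_mem γ (uIcc_of_ge hts ▸ ⟨le_lastPoint ht hts, lastPoint_le K s⟩)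
  · rw [h.eq]
    exact mem_image_of_mem γ (uIcc_of_le hst ▸ ⟨le_nextPoint K s, nextPoint_le ht hst⟩)

variable [OrderTopology T]

theorem continuous_comp_lastPoint [TopologicalSpace X] (h : IsGapConst γ K) (hγ : Continuous γ) :
    Continuous (γ ∘ lastPoint K) := by
  refine continuous_iff_continuousAt.2 fun t => ?_
  by_cases ht : t ∈ K
  · intro V hV
    have hV : γ ⁻¹' V ∈ 𝓝 t := hγ.continuousAt (by simpa [lastPoint_of_mem ht] using hV)
    rw [mem_map]
    filter_upwards [eventually_uIcc_subset hV] with s hs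
    exact image_subset_iff.2 hs (h.apply_lastPoint_mem ht s)
  · refine (continuousAt_const (y := γ (lastPoint K t))).congr ?_
    filter_upwards [eventually_lastPoint_eq h.isClosed ht] with s hs
    exact congrArg γ hs.symm

protected theorem sInter [TopologicalSpace X] [T2Space X] (hγ : Continuous γ) {c : Set (Set T)}
    (hc : ∀ K ∈ c, IsGapConst γ K) (hchain : IsChain (· ⊆ ·) c) (hne : c.Nonempty) :
    IsGapConst γ (⋂₀ c) := by
  refine ⟨isClosed_sInter fun K hK => (hc K hK).isClosed, fun K hK => (hc K hK).bot_mem,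
    fun K hK => (hc K hK).top_mem, fun t => ?_⟩
  let a := lastPoint (⋂₀ c) t
  let b := nextPoint (⋂₀ c) t
  let P (K : c) : Set (T × T) :=
    (((K : Set T) ∩ Icc a t) ×ˢ ((K : Set T) ∩ Icc t b)) ∩ {w | γ w.1 = γ w.2}
  have hP_closed (K : c) : IsClosed (P K) :=
    (((hc K K.2).isClosed.inter isClosed_Icc).prod ((hc K K.2).isClosed.inter isClosed_Icc)).inter
      (isClosed_eq (hγ.comp continuous_fst) (hγ.comp continuous_snd))
  have hP_mono {K K' : c} (h : (K : Set T) ⊆ K') : P K ⊆ P K' :=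
    inter_subset_inter_left _ <|
      prod_mono (inter_subset_inter_left _ h) (inter_subset_inter_left _ h)
  have hP_nonempty (K : c) : (P K).Nonempty :=
    have hK := hc K K.2
    ⟨(lastPoint K t, nextPoint K t),
      ⟨⟨lastPoint_mem hK.isClosed hK.bot_mem t,
        lastPoint_le_of_subset (sInter_subset_of_mem K.2) t, lastPoint_le _ t⟩,
      ⟨nextPoint_mem hK.isClosed hK.top_mem t, le_nextPoint _ t,
        nextPoint_le_of_subset (sInter_subset_of_mem K.2) t⟩⟩, hK.eq t⟩
  have : Nonempty c := hne.to_subtype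
  have hP_directed : Directed (· ⊇ ·) P := fun K K' =>
    (hchain.total K.2 K'.2).elim (fun h => ⟨K, subset_rfl, hP_mono h⟩)
      fun h => ⟨K', hP_mono h, subset_rfl⟩
  obtain ⟨⟨p, q⟩, hpq⟩ := IsCompact.nonempty_iInter_of_directed_nonempty_isCompact_isClosed P
    hP_directed hP_nonempty (fun K => (hP_closed K).isCompact) hP_closed
  have hpq (K : c) : (p, q) ∈ P K := mem_iInter.1 hpq K
  obtain ⟨⟨⟨-, hap, hpt⟩, -, htq, hqb⟩, heq⟩ := hpq (Classical.arbitrary c)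
  have hpc : p ∈ ⋂₀ c := fun K hK => (hpq ⟨K, hK⟩).1.1.1
  have hqc : q ∈ ⋂₀ c := fun K hK => (hpq ⟨K, hK⟩).1.2.1
  have hpa : p = a := (le_lastPoint hpc hpt).antisymm hap
  have hqb : q = b := hqb.antisymm (nextPoint_le hqc htq)
  exact (congrArg γ hpa).symm.trans (Eq.trans heq (congrArg γ hqb))

theorem exists_minimal [TopologicalSpace X] [T2Space X] (hγ : Continuous γ) :
    ∃ K, Minimal (IsGapConst γ) K :=
  let ⟨K, _, hK⟩ := zorn_superset_nonempty {K | IsGapConst γ K}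
    (fun c hc hchain hne =>
      ⟨⋂₀ c, IsGapConst.sInter hγ hc hchain hne, fun _ => sInter_subset_of_mem⟩)
    univ (.univ γ)
  ⟨K, hK⟩

theorem sdiff_Ioo (h : IsGapConst γ K) {a b : T} (ha : a ∈ K) (hb : b ∈ K) (hab : γ a = γ b) :
    IsGapConst γ (K \ Ioo a b) := by
  have ha' : a ∈ K \ Ioo a b := ⟨ha, fun h => h.1.false⟩
  have hb' : b ∈ K \ Ioo a b := ⟨hb, fun h => h.2.false⟩
  have hclosed : IsClosed (K \ Ioo a b) := h.isClosed.sdiff isOpen_Ioo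
  have hbot : ⊥ ∈ K \ Ioo a b := ⟨h.bot_mem, fun h => h.1.not_ge bot_le⟩
  have htop : ⊤ ∈ K \ Ioo a b := ⟨h.top_mem, fun h => h.2.not_ge le_top⟩
  have hlast := lastPoint_mem hclosed hbot
  have hnext := nextPoint_mem hclosed htop
  refine ⟨hclosed, hbot, htop, fun t => ?_⟩
  by_cases ht : t ∈ Ioo a b
  · have hlast_eq : lastPoint (K \ Ioo a b) t = a :=
      (le_of_not_gt fun hlt => (hlast t).2 ⟨hlt, (lastPoint_le _ t).trans_lt ht.2⟩).antisymm
        (le_lastPoint ha' ht.1.le)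
    have hnext_eq : nextPoint (K \ Ioo a b) t = b :=
      (nextPoint_le hb' ht.2.le).antisymm
        (le_of_not_gt fun hlt => (hnext t).2 ⟨ht.1.trans_le (le_nextPoint _ t), hlt⟩)
    rw [hlast_eq, hnext_eq, hab]
  · have hlast_notMem : lastPoint K t ∉ Ioo a b := fun hmem =>
      ht ⟨hmem.1.trans_le (lastPoint_le K t),
        lt_of_not_ge fun hbt => (le_lastPoint hb hbt).not_gt hmem.2⟩
    have hnext_notMem : nextPoint K t ∉ Ioo a b := fun hmem =>
      ht ⟨lt_of_not_ge fun hta => (nextPoint_le ha hta).not_gt hmem.1,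
        (le_nextPoint K t).trans_lt hmem.2⟩
    rw [lastPoint_eq_of_subset sdiff_subset ⟨lastPoint_mem h.isClosed h.bot_mem t, hlast_notMem⟩,
      nextPoint_eq_of_subset sdiff_subset ⟨nextPoint_mem h.isClosed h.top_mem t, hnext_notMem⟩,
      h.eq]

theorem apply_lastPoint_eq_of_minimal (hK : Minimal (IsGapConst γ) K) {u : T} (hst : s ≤ t)
    (htu : t ≤ u) (hsu : γ (lastPoint K s) = γ (lastPoint K u)) :
    γ (lastPoint K t) = γ (lastPoint K s) := by
  have hmem := lastPoint_mem hK.prop.isClosed hK.prop.bot_mem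
  -- Since `γ` agrees at two points of `K`, the part of `K` between them can be deleted.
  have ht := hK.le_of_le (hK.prop.sdiff_Ioo (hmem s) (hmem u) hsu) sdiff_subset (hmem t)
  rcases (lastPoint_mono K hst).eq_or_lt with h | hlt
  · rw [h]
  · rw [(lastPoint_mono K htu).antisymm (le_of_not_gt fun h => ht.2 ⟨hlt, h⟩), hsu]

end IsGapConst

theorem exists_path_ordConnected_fibres [OrderTopology T] [TopologicalSpace X] [T2Space X]
    {γ : T → X} (hγ : Continuous γ) :
    ∃ η : T → X, Continuous η ∧ range η ⊆ range γ ∧ η ⊥ = γ ⊥ ∧ η ⊤ = γ ⊤ ∧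
      ∀ x, (η ⁻¹' {x}).OrdConnected := by
  obtain ⟨K, hK⟩ := IsGapConst.exists_minimal hγ
  refine ⟨γ ∘ lastPoint K, hK.prop.continuous_comp_lastPoint hγ, range_comp_subset_range _ _,
    congrArg γ (lastPoint_of_mem hK.prop.bot_mem), congrArg γ (lastPoint_of_mem hK.prop.top_mem),
    fun x => ⟨?_⟩⟩
  rintro s rfl u hu t ⟨hst, htu⟩
  exact IsGapConst.apply_lastPoint_eq_of_minimal hK hst htu hu.symm

end GapConst

theorem exists_continuous_factor {X Y Z : Type*} [TopologicalSpace X] [CompactSpace X]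
    [TopologicalSpace Y] [T2Space Y] [TopologicalSpace Z] {f : X → Y} {g : X → Z}
    (hf : Continuous f) (hsurj : Function.Surjective f) (hg : Continuous g)
    (h : g.FactorsThrough f) : ∃ k : Y → Z, Continuous k ∧ ∀ a, k (f a) = g a := by
  have hq : IsQuotientMap (ContinuousMap.mk f hf) := hf.isClosedMap.isQuotientMap hf hsurj
  let k := hq.lift ⟨g, hg⟩ h
  exact ⟨k, k.continuous, DFunLike.congr_fun (hq.lift_comp ⟨g, hg⟩ h)⟩

section Collapse

theorem exists_monotone_combination {T : Type*} [LinearOrder T] [TopologicalSpace T]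
    {f : ℕ → T → ℝ} {C : ℝ} (hf : ∀ n, Continuous (f n)) (hmono : ∀ n, Monotone (f n))
    (hC : ∀ n t, ‖f n t‖ ≤ C) :
    ∃ c : T → ℝ, Continuous c ∧ Monotone c ∧ ∀ s t, c s = c t ↔ ∀ n, f n s = f n t := by
  have hbound (n : ℕ) (t : T) : ‖(1 / 2 : ℝ) ^ n * f n t‖ ≤ (1 / 2) ^ n * C := by
    rw [norm_mul, Real.norm_of_nonneg (by positivity)]
    gcongr
    exact hC n t
  have hsumC : Summable fun n : ℕ => (1 / 2 : ℝ) ^ n * C := summable_geometric_two.mul_right C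
  have hsum (t : T) : Summable fun n => (1 / 2 : ℝ) ^ n * f n t :=
    .of_norm_bounded hsumC (hbound · t)
  have hle {s t : T} (hst : s ≤ t) (n : ℕ) : (1 / 2 : ℝ) ^ n * f n s ≤ (1 / 2 : ℝ) ^ n * f n t := by
    gcongr
    exact hmono n hst
  refine ⟨fun t => ∑' n, (1 / 2 : ℝ) ^ n * f n t,
    continuous_tsum (fun n => (hf n).const_mul _) hsumC hbound,
    fun s t hst => (hsum s).tsum_le_tsum (hle hst) (hsum t), fun s t => ?_⟩
  refine ⟨fun h => ?_, fun h => tsum_congr fun n => by rw [h]⟩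
  wlog hst : s ≤ t generalizing s t
  · exact fun n => (this t s h.symm (le_of_not_ge hst) n).symm
  by_contra! hne
  obtain ⟨n, hn⟩ := hne
  have hlt : (1 / 2 : ℝ) ^ n * f n s < (1 / 2 : ℝ) ^ n * f n t := by
    gcongr
    exact (hmono n hst).lt_of_ne hn
  exact ((hsum s).tsum_lt_tsum (hle hst) hlt (hsum t)).ne h

variable {X : Type*} [MetricSpace X] {η : I → X} {q s t : I}

/-- The distance from the point `η q` to the part `η '' Ici t` of the path `η`. These functions of
`t` are monotone and, if the fibres of `η` are intervals, separate the same points as `η`, so that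
a weighted sum of them collapses exactly the fibres. -/
noncomputable def tailDist (η : I → X) (q t : I) : ℝ :=
  sInf ((fun s => dist (η q) (η (max s t))) '' univ)

namespace tailDist

theorem le_dist (q : I) (hts : t ≤ s) : tailDist η q t ≤ dist (η q) (η s) :=
  csInf_le ⟨0, by rintro _ ⟨s, -, rfl⟩; exact dist_nonneg⟩ ⟨s, trivial, by simp [hts]⟩

theorem nonneg (q t : I) : 0 ≤ tailDist η q t :=
  Real.sInf_nonneg (by rintro _ ⟨s, -, rfl⟩; exact dist_nonneg)

theorem eq_zero (htq : t ≤ q) : tailDist η q t = 0 :=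
  ((le_dist q htq).trans_eq (dist_self _)).antisymm (nonneg q t)

variable (hη : Continuous η)
include hη

theorem continuous (q : I) : Continuous (tailDist η q) :=
  isCompact_univ.continuous_sInf (f := fun t s : I => dist (η q) (η (max s t))) (by fun_prop)

theorem exists_eq_dist (q t : I) : ∃ s ≥ t, tailDist η q t = dist (η q) (η s) :=
  let ⟨s, _, hs⟩ := isCompact_univ.exists_sInf_image_eq (s := (univ : Set I)) univ_nonempty
    (f := fun s : I => dist (η q) (η (max s t))) (by fun_prop)
  ⟨max s t, le_max_right s t, hs⟩

theorem monotone (q : I) : Monotone (tailDist η q) := fun t t' htt' => by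
  obtain ⟨s, hs, heq⟩ := exists_eq_dist hη q t'
  exact heq ▸ le_dist q (htt'.trans hs)

variable (hfib : ∀ x, (η ⁻¹' {x}).OrdConnected)
include hfib

theorem pos (hqt : q ≤ t) (hne : η q ≠ η t) : 0 < tailDist η q t := by
  obtain ⟨s, hs, heq⟩ := exists_eq_dist hη q t
  rw [heq, dist_pos]
  exact fun h => hne ((hfib (η q)).out rfl h.symm ⟨hqt, hs⟩).symm

theorem congr (q : I) (hst : s ≤ t) (heq : η s = η t) : tailDist η q s = tailDist η q t := by
  refine (monotone hη q hst).antisymm ?_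
  obtain ⟨u, hu, hdist⟩ := exists_eq_dist hη q s
  rw [hdist]
  rcases le_total t u with htu | hut
  · exact le_dist q htu
  · have hη_eq : η u = η t := (hfib (η t)).out heq rfl ⟨hu, hut⟩
    exact hη_eq ▸ le_dist q le_rfl

theorem forall_eq_iff {Q : ℕ → I} (hQ : DenseRange Q) (s t : I) :
    (∀ n, tailDist η (Q n) s = tailDist η (Q n) t) ↔ η s = η t := by
  wlog hst : s ≤ t generalizing s t
  · simpa only [eq_comm] using this t s (le_of_not_ge hst)
  refine ⟨fun h => by_contra fun hne => ?_, fun heq n => congr hη hfib _ hst heq⟩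
  have hst : s < t := hst.lt_of_ne fun h => hne (congrArg η h)
  have hopen : IsOpen (Ioi s ∩ η ⁻¹' {η t}ᶜ ∩ Iio t) :=
    (isOpen_Ioi.inter (isOpen_compl_singleton.preimage hη)).inter isOpen_Iio
  have hnear : ∀ᶠ r in 𝓝[>] s, r ∈ Ioi s ∩ η ⁻¹' {η t}ᶜ ∩ Iio t := by
    filter_upwards [self_mem_nhdsWithin, nhdsWithin_le_nhds (hη.continuousAt.eventually_ne hne),
      nhdsWithin_le_nhds (gt_mem_nhds hst)] with r hsr hr hrt using ⟨⟨hsr, hr⟩, hrt⟩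
  have : (𝓝[>] s).NeBot := nhdsGT_neBot_of_exists_gt ⟨t, hst⟩
  obtain ⟨n, ⟨hsn, hn⟩, hnt⟩ := hQ.exists_mem_open hopen hnear.exists
  exact (pos hη hfib hnt.le hn).ne ((eq_zero hsn.le).symm.trans (h n))

end tailDist

theorem exists_collapse (hη : Continuous η) (hfib : ∀ x, (η ⁻¹' {x}).OrdConnected)
    (hne : η 0 ≠ η 1) :
    ∃ c : I → I, Continuous c ∧ Function.Surjective c ∧ c 0 = 0 ∧ c 1 = 1 ∧
      ∀ s t, c s = c t ↔ η s = η t := by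
  have hbound (n : ℕ) (t : I) :
      ‖tailDist η (TopologicalSpace.denseSeq I n) t‖ ≤ Metric.diam (range η) := by
    rw [Real.norm_of_nonneg (tailDist.nonneg _ _)]
    exact (tailDist.le_dist _ le_rfl).trans (Metric.dist_le_diam_of_mem
      (isCompact_range hη).isBounded (mem_range_self _) (mem_range_self _))
  obtain ⟨c, hc, hmono, hceq⟩ := exists_monotone_combination
    (fun n => tailDist.continuous hη _) (fun n => tailDist.monotone hη _) hbound
  simp only [tailDist.forall_eq_iff hη hfib (TopologicalSpace.denseRange_denseSeq I)] at hceq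
  have hlt : c 0 < c 1 := (hmono zero_le_one).lt_of_ne (mt (hceq 0 1).1 hne)
  have hlen : 0 < c 1 - c 0 := sub_pos.2 hlt
  let d (t : I) : I := ⟨(c t - c 0) / (c 1 - c 0),
    div_nonneg (sub_nonneg.2 (hmono t.2.1)) hlen.le,
    (div_le_one hlen).2 (sub_le_sub_right (hmono t.2.2) _)⟩
  have hd : Continuous d := ((hc.sub continuous_const).div_const _).subtype_mk _
  have hd0 : d 0 = 0 := Subtype.ext (by simp [d])
  have hd1 : d 1 = 1 := Subtype.ext (by simp [d, hlen.ne'])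
  refine ⟨d, hd, fun u => ?_, hd0, hd1, fun s t => ?_⟩
  · exact intermediate_value_univ 0 1 hd (by rw [hd0, hd1]; exact ⟨nonneg', le_one'⟩)
  · rw [← hceq, Subtype.ext_iff, div_left_inj' hlen.ne', sub_left_inj]

end Collapse

theorem exists_injective_path {X : Type*} [MetricSpace X] {x y : X} (γ : Path x y) (hxy : x ≠ y) :
    ∃ β : Path x y, Function.Injective β ∧ range β ⊆ range γ := by
  obtain ⟨η, hη, hrange, h0, h1, hfib⟩ := exists_path_ordConnected_fibres γ.continuous
  replace h0 : η 0 = x := h0.trans γ.source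
  replace h1 : η 1 = y := h1.trans γ.target
  obtain ⟨c, hc, hsurj, hc0, hc1, hceq⟩ := exists_collapse hη hfib (by rwa [h0, h1])
  obtain ⟨β, hβ, hβc⟩ := exists_continuous_factor hc hsurj hη fun s t => (hceq s t).1
  refine ⟨⟨⟨β, hβ⟩, hc0 ▸ (hβc 0).trans h0, hc1 ▸ (hβc 1).trans h1⟩, ?_, ?_⟩
  · intro u v huv
    obtain ⟨s, rfl⟩ := hsurj u
    obtain ⟨t, rfl⟩ := hsurj v
    exact (hceq s t).2 ((hβc s).symm.trans (Eq.trans huv (hβc t)))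
  · rintro _ ⟨u, rfl⟩
    obtain ⟨t, rfl⟩ := hsurj u
    exact hrange ⟨t, (hβc t).symm⟩

/-! ### Retractions onto arcs -/

section Circle

variable {X : Type*} [TopologicalSpace X] {x y : X}

theorem injOn_path_trans {γ : Path x y} {γ' : Path y x} (hγ : Function.Injective γ)
    (hγ' : Function.Injective γ') (hmeet : range γ ∩ range γ' ⊆ {x, y}) :
    InjOn (γ.trans γ') (Iio 1) := by
  have hcross {s t : I} (heq : γ s = γ' t) : t = 0 ∨ t = 1 := by
    rcases hmeet ⟨⟨s, rfl⟩, t, heq.symm⟩ with h | h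
    · exact .inr (hγ' (heq.symm.trans (h.trans γ'.target.symm)))
    · exact .inl (hγ' (heq.symm.trans (h.trans γ'.source.symm)))
  have hmixed {s t : I} (hs : (s : ℝ) ≤ 1 / 2) (ht : ¬(t : ℝ) ≤ 1 / 2) (ht1 : t < 1) :
      (γ.trans γ') s ≠ (γ.trans γ') t := by
    intro heq
    rw [Path.trans_apply, Path.trans_apply, dif_pos hs, dif_neg ht] at heq
    have ht1 : (t : ℝ) < 1 := ht1
    rcases hcross heq with h | h
    all_goals
      have := congrArg Subtype.val h
      simp only [Icc.coe_zero, Icc.coe_one] at this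
      linarith
  intro s hs t ht heq
  by_cases h : (s : ℝ) ≤ 1 / 2 <;> by_cases h' : (t : ℝ) ≤ 1 / 2
  · rw [Path.trans_apply, Path.trans_apply, dif_pos h, dif_pos h'] at heq
    have := congrArg Subtype.val (hγ heq)
    exact Subtype.ext (by linarith)
  · exact absurd heq (hmixed h h' ht)
  · exact absurd heq.symm (hmixed h' h hs)
  · rw [Path.trans_apply, Path.trans_apply, dif_neg h, dif_neg h'] at heq
    have := congrArg Subtype.val (hγ' heq)
    exact Subtype.ext (by linarith)

theorem exists_isEmbedding_addCircle_of_loop [T2Space X] {γ : Path x x} (hγ : InjOn γ (Iio 1)) :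
    ∃ f : AddCircle (1 : ℝ) → X, IsEmbedding f := by
  have : Fact ((0 : ℝ) < 1) := ⟨one_pos⟩
  have hcont : Continuous (AddCircle.liftIco 1 0 γ.extend) :=
    AddCircle.liftIco_zero_continuous (by simp) γ.continuous_extend.continuousOn
  refine ⟨_, (hcont.isClosedEmbedding fun u v huv => ?_).isEmbedding⟩
  obtain ⟨s, hs, rfl⟩ := AddCircle.eq_coe_Ico u
  obtain ⟨t, ht, rfl⟩ := AddCircle.eq_coe_Ico v
  rw [AddCircle.liftIco_zero_coe_apply hs, AddCircle.liftIco_zero_coe_apply ht,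
    γ.extend_apply ⟨hs.1, hs.2.le⟩, γ.extend_apply ⟨ht.1, ht.2.le⟩] at huv
  have hst : (⟨s, hs.1, hs.2.le⟩ : I) = ⟨t, ht.1, ht.2.le⟩ := hγ (by exact hs.2) (by exact ht.2) huv
  exact congrArg _ (congrArg Subtype.val hst)

end Circle

/-- A path that leaves `A` and returns to `A` at another point would close up to a circle. -/
theorem eq_of_joinedIn_compl {X : Type*} [MetricSpace X]
    (hX : ¬∃ f : AddCircle (1 : ℝ) → X, IsEmbedding f) {A : Set X} (hA : IsPathConnected A)
    {p q : X} (hp : p ∈ A) (hq : q ∈ A) (h : JoinedIn (Aᶜ ∪ {p, q}) p q) : p = q := by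
  by_contra hpq
  obtain ⟨γ, hγ⟩ := h
  obtain ⟨γ', hγ'⟩ := hA.joinedIn p hp q hq
  obtain ⟨β, hβ, hβγ⟩ := exists_injective_path γ hpq
  obtain ⟨β', hβ', hβγ'⟩ := exists_injective_path γ'.symm (Ne.symm hpq)
  refine hX (exists_isEmbedding_addCircle_of_loop (injOn_path_trans hβ hβ' ?_))
  rintro z ⟨hz, hz'⟩
  obtain ⟨s, rfl⟩ := hβγ hz
  obtain ⟨t, ht⟩ := hβγ' hz'
  exact (hγ s).resolve_left fun hs => hs (ht ▸ hγ' _)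

section Retraction

variable {X : Type*} [MetricSpace X] {A : Set X} {a b : X}

theorem joinedIn_image_uIcc (γ : Path a b) (s t : I) : JoinedIn (γ '' uIcc s t) (γ s) (γ t) :=
  ⟨γ.subpath s t, fun u => γ.range_subpath s t ▸ mem_range_self u⟩

theorem isGapConst_preimage (hX : ¬∃ f : AddCircle (1 : ℝ) → X, IsEmbedding f)
    (hA : IsPathConnected A) (hclosed : IsClosed A) (γ : Path a b) (ha : a ∈ A) (hb : b ∈ A) :
    IsGapConst γ (γ ⁻¹' A) := by
  have hK : IsClosed (γ ⁻¹' A) := hclosed.preimage γ.continuous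
  have hbot : (⊥ : I) ∈ γ ⁻¹' A := (γ.source.symm ▸ ha : γ 0 ∈ A)
  have htop : (⊤ : I) ∈ γ ⁻¹' A := (γ.target.symm ▸ hb : γ 1 ∈ A)
  refine ⟨hK, hbot, htop, fun t => ?_⟩
  refine eq_of_joinedIn_compl hX hA (lastPoint_mem hK hbot t) (nextPoint_mem hK htop t)
    ((joinedIn_image_uIcc γ _ _).mono (image_subset_iff.2 fun s hs => ?_))
  rw [uIcc_of_le ((lastPoint_le _ t).trans (le_nextPoint _ t))] at hs
  by_cases hsK : s ∈ γ ⁻¹' A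
  · refine .inr ((le_total s t).imp (fun hst => ?_) fun hts => ?_)
    · exact congrArg γ ((le_lastPoint hsK hst).antisymm hs.1)
    · exact congrArg γ (hs.2.antisymm (nextPoint_le hsK hts))
  · exact .inl hsK

theorem joinedIn_lastPoint (γ : Path a b) (A : Set X) (t : I) :
    JoinedIn (Aᶜ ∪ {γ (lastPoint (γ ⁻¹' A) t)}) (γ (lastPoint (γ ⁻¹' A) t)) (γ t) := by
  refine (joinedIn_image_uIcc γ _ _).mono (image_subset_iff.2 fun s hs => ?_)
  rw [uIcc_of_le (lastPoint_le _ t)] at hs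
  by_cases hsK : s ∈ γ ⁻¹' A
  · exact .inr (congrArg γ ((le_lastPoint hsK hs.2).antisymm hs.1))
  · exact .inl hsK

theorem factorsThrough_lastPoint (hX : ¬∃ f : AddCircle (1 : ℝ) → X, IsEmbedding f)
    (hA : IsPathConnected A) (hclosed : IsClosed A) (γ : Path a b) (ha : a ∈ A) :
    (γ ∘ lastPoint (γ ⁻¹' A)).FactorsThrough γ := by
  intro s t hst
  have hbot : (⊥ : I) ∈ γ ⁻¹' A := (γ.source.symm ▸ ha : γ 0 ∈ A)
  have hmem := lastPoint_mem (hclosed.preimage γ.continuous) hbot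
  have hjoin := joinedIn_lastPoint γ A
  refine eq_of_joinedIn_compl hX hA (hmem s) (hmem t)
    (((hjoin s).mono (by gcongr; simp)).trans ((hst ▸ (hjoin t).symm).mono (by gcongr; simp)))

theorem exists_retraction [CompactSpace X] [PreconnectedSpace X] [LocallyConnectedSpace X]
    (hX : ¬∃ f : AddCircle (1 : ℝ) → X, IsEmbedding f)
    (hA : IsPathConnected A) (hclosed : IsClosed A) :
    ∃ R : X → X, Continuous R ∧ (∀ x, R x ∈ A) ∧ (∀ x ∈ A, R x = x) ∧
      ∀ x ∉ A, ∀ᶠ y in 𝓝 x, R y = R x := by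
  obtain ⟨a, ha⟩ := hA.nonempty
  obtain ⟨ψ, hψ⟩ := exists_surjective_path a a
  have hK := isGapConst_preimage hX hA hclosed ψ ha ha
  obtain ⟨R, hR, hRψ⟩ := exists_continuous_factor ψ.continuous hψ
    (hK.continuous_comp_lastPoint ψ.continuous) (factorsThrough_lastPoint hX hA hclosed ψ ha)
  refine ⟨R, hR, hψ.forall.2 fun t => ?_, hψ.forall.2 fun t ht => ?_, fun x hx => ?_⟩
  · exact hRψ t ▸ lastPoint_mem hK.isClosed hK.bot_mem t
  · exact (hRψ t).trans (congrArg ψ (lastPoint_of_mem ht))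
  · have hfib : ∀ t ∈ ψ ⁻¹' {x}, ∀ᶠ s in 𝓝 t, R (ψ s) = R x := by
      rintro t rfl
      filter_upwards [eventually_lastPoint_eq hK.isClosed hx] with s hs
      rw [hRψ, hRψ, Function.comp_apply, hs, Function.comp_apply]
    filter_upwards [ψ.continuous.isClosedMap.eventually_nhds_fiber x hfib] with y hy
    obtain ⟨s, rfl⟩ := hψ y
    exact hy s rfl

end Retraction

section ArcRetraction

/-- `r` retracts `X` onto the arc `α`, followed by the inverse of the parametrisation `α`, and is
locally constant off the arc. -/
structure ArcRetraction {X : Type*} [TopologicalSpace X] (α : I → X) (r : X → I) : Prop where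
  continuous_arc : Continuous α
  continuous_retraction : Continuous r
  retraction_arc (t : I) : r (α t) = t
  eventually_eq {y : X} (hy : y ≠ α (r y)) : ∀ᶠ z in 𝓝 y, r z = r y

theorem exists_arcRetraction {X : Type*} [MetricSpace X] [CompactSpace X] [PreconnectedSpace X]
    [LocallyConnectedSpace X] (hX : ¬∃ f : AddCircle (1 : ℝ) → X, IsEmbedding f) {α : I → X}
    (hα : Continuous α) (hinj : Function.Injective α) : ∃ r : X → I, ArcRetraction α r := by
  have : PathConnectedSpace I := isPathConnected_iff_pathConnectedSpace.1
    ((convex_Icc 0 1).isPathConnected (nonempty_Icc.2 zero_le_one))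
  obtain ⟨R, hR, hRmem, hRid, hRconst⟩ :=
    exists_retraction hX (isPathConnected_range hα) (isCompact_range hα).isClosed
  choose r hr using hRmem
  refine ⟨r, hα, ?_, fun t => ?_, fun {y} hy => ?_⟩
  · rw [(hα.isClosedEmbedding hinj).isEmbedding.continuous_iff]
    exact hR.congr fun y => (hr y).symm
  · exact hinj ((hr _).trans (hRid _ (mem_range_self t)))
  · have hy : y ∉ range α := fun hmem => hy ((hr y).trans (hRid y hmem)).symm
    filter_upwards [hRconst y hy] with z hz
    exact hinj (by rw [hr, hr, hz])

theorem finite_image_of_eventually_eq {X Y : Type*} [TopologicalSpace X] {f : X → Y} {C : Set X}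
    (hC : IsCompact C) (hf : ∀ x ∈ C, ∀ᶠ y in 𝓝 x, f y = f x) : (f '' C).Finite :=
  hC.induction_on (by simp) (fun _ _ hst ht => ht.subset (image_mono hst))
    (fun _ _ hs ht => image_union f _ _ ▸ hs.union ht)
    fun x hx => ⟨{y | f y = f x}, mem_nhdsWithin_of_mem_nhds (hf x hx),
      (finite_singleton (f x)).subset (image_subset_iff.2 fun _ hy => hy)⟩

/-- The retraction of `X` onto the fibre of `r` over `x` that sends all other fibres to `α x`; it
makes a copy of a path onto `X` fit into that fibre. -/
noncomputable def fibreRetraction {X : Type*} (α : I → X) (r : X → I) (x : I) (y : X) : X :=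
  if r y = x then y else α x

namespace ArcRetraction

section

variable {X : Type*} [TopologicalSpace X] {α : I → X} {r : X → I}

theorem retraction_fibreRetraction (h : ArcRetraction α r) (x : I) (y : X) :
    r (fibreRetraction α r x y) = x := by
  unfold fibreRetraction
  split_ifs with hy
  · exact hy
  · exact h.retraction_arc x

theorem fibreRetraction_arc (h : ArcRetraction α r) (x t : I) :
    fibreRetraction α r x (α t) = α x := by
  unfold fibreRetraction
  split_ifs with ht
  · rw [← ht, h.retraction_arc]
  · rfl

theorem continuous_fibreRetraction (h : ArcRetraction α r) (x : I) :
    Continuous (fibreRetraction α r x) := by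
  refine Continuous.if (fun y hy => ?_) continuous_id continuous_const
  have hclosed : IsClosed {y | r y = x} := isClosed_singleton.preimage h.continuous_retraction
  have hyx : r y = x := hclosed.frontier_subset hy
  by_contra hne
  refine hy.2 (mem_interior_iff_mem_nhds.2 ?_)
  filter_upwards [h.eventually_eq (hyx.symm ▸ hne)] with z hz
  exact hz.trans hyx

end

variable {X : Type*} [MetricSpace X] [CompactSpace X] {α : I → X} {r : X → I}

theorem finite_far_fibres (h : ArcRetraction α r) {ε : ℝ} (hε : 0 < ε) :
    (r '' {y | ε ≤ dist y (α (r y))}).Finite := by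
  have hclosed : IsClosed {y | ε ≤ dist y (α (r y))} := isClosed_le continuous_const
    (continuous_id.dist (h.continuous_arc.comp h.continuous_retraction))
  refine finite_image_of_eventually_eq hclosed.isCompact fun y hy => h.eventually_eq ?_
  exact dist_pos.1 (hε.trans_le hy)

theorem finite_far_fibreRetraction (h : ArcRetraction α r) {ε : ℝ} (hε : 0 < ε) :
    {x | ∃ y, ε ≤ dist (fibreRetraction α r x y) (α x)}.Finite := by
  refine (h.finite_far_fibres hε).subset fun x ⟨y, hy⟩ => ?_
  have hx := h.retraction_fibreRetraction x y
  exact ⟨_, show ε ≤ dist _ (α (r _)) by rwa [hx], hx⟩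

theorem countable_nontrivial_fibres (h : ArcRetraction α r) :
    (r '' {y | y ≠ α (r y)}).Countable := by
  refine (countable_iUnion fun n : ℕ =>
    (h.finite_far_fibres (Nat.one_div_pos_of_nat (n := n))).countable).mono ?_
  rintro _ ⟨y, hy, rfl⟩
  obtain ⟨n, hn⟩ := exists_nat_one_div_lt (dist_pos.2 hy)
  exact mem_iUnion.2 ⟨n, y, hn.le, rfl⟩

end ArcRetraction

end ArcRetraction

/-! ### Detours off the arc -/

section Slots

open MeasureTheory NNReal

theorem dist_le_of_mem_slots {lo hi : I → ℝ} {K : ℝ≥0}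
    (h : ∀ x y : I, x < y → (y : ℝ) - x ≤ K * (lo y - hi x)) {x y : I} {s t : ℝ}
    (hs : s ∈ Icc (lo x) (hi x)) (ht : t ∈ Icc (lo y) (hi y)) : dist x y ≤ K * dist s t := by
  have hlt {x y : I} {s t : ℝ} (hxy : x < y) (hs : s ≤ hi x) (ht : lo y ≤ t) :
      dist x y ≤ K * dist s t := by
    have hxy' : (x : ℝ) ≤ y := hxy.le
    rw [dist_comm x, dist_comm s, Subtype.dist_eq, Real.dist_eq, Real.dist_eq,
      abs_of_nonneg (sub_nonneg.2 hxy')]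
    calc (y : ℝ) - x ≤ K * (lo y - hi x) := h x y hxy
      _ ≤ K * |t - s| := by gcongr; exact (sub_le_sub ht hs).trans (le_abs_self _)
  rcases lt_trichotomy x y with hxy | rfl | hyx
  · exact hlt hxy hs.2 ht.1
  · rw [dist_self]
    positivity
  · rw [dist_comm x, dist_comm s]
    exact hlt hyx ht.2 hs.1

theorem exists_lipschitz_collapse {lo hi : I → ℝ} {K : ℝ≥0}
    (h : ∀ x y : I, x < y → (y : ℝ) - x ≤ K * (lo y - hi x)) :
    ∃ c : ℝ → I, LipschitzWith K c ∧ ∀ x, ∀ s ∈ Icc (lo x) (hi x), c s = x := by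
  let slots : Set ℝ := {s | ∃ x, s ∈ Icc (lo x) (hi x)}
  have hslot : ∀ s ∈ slots, ∃ x, s ∈ Icc (lo x) (hi x) := fun _ hs => hs
  choose! f hf using hslot
  have hlip : LipschitzOnWith K (fun s => (f s : ℝ)) slots :=
    .of_dist_le_mul fun s hs t ht => dist_le_of_mem_slots h (hf s hs) (hf t ht)
  obtain ⟨g, hg, hfg⟩ := hlip.extend_real
  refine ⟨fun s => projIcc 0 1 zero_le_one (g s), ?_, fun x s hs => ?_⟩
  · rw [← one_mul K]
    exact (LipschitzWith.projIcc zero_le_one).comp hg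
  · have hfx : f s = x := dist_le_zero.1 <| by
      simpa only [dist_self, mul_zero] using dist_le_of_mem_slots h (hf s ⟨x, hs⟩) hs
    simp only [← hfg ⟨x, hs⟩, projIcc_val, hfx]

theorem exists_isProbabilityMeasure_of_countable {T : Type*} [MeasurableSpace T]
    [MeasurableSingletonClass T] [Nonempty T] {S : Set T} (hS : S.Countable) :
    ∃ μ : Measure T, IsProbabilityMeasure μ ∧ ∀ x ∈ S, μ.real {x} ≠ 0 := by
  obtain ⟨f, hf⟩ := countable_iff_exists_subset_range.1 hS
  let p : I := ⟨1 / 2, by norm_num, by norm_num⟩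
  have hp0 : p ≠ 0 := ne_of_apply_ne Subtype.val (by norm_num [p])
  have hp1 : p ≠ 1 := ne_of_apply_ne Subtype.val (by norm_num [p])
  have hfm : Measurable f := measurable_from_top
  refine ⟨(ProbabilityTheory.geometricMeasure p).map f,
    Measure.isProbabilityMeasure_map hfm.aemeasurable, fun x hx => ?_⟩
  obtain ⟨n, rfl⟩ := hf hx
  rw [map_measureReal_apply hfm (measurableSet_singleton _)]
  exact ((ProbabilityTheory.geometricMeasure_real_singleton_pos hp0 hp1 n).trans_le
    (measureReal_mono (by simp))).ne'

/-- The left end of the slot of `x`, an interval of length `μ {x} / 3` in which a detour off the arc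
at the point with parameter `x` is inserted. The term `2 * x` keeps the slots of `x < y` at distance
at least `2 * (y - x) / 3`. -/
noncomputable def slotLeft (μ : Measure I) (x : I) : ℝ := (2 * x + μ.real (Iio x)) / 3

/-- The right end of the slot of `x`, see `slotLeft`. -/
noncomputable def slotRight (μ : Measure I) (x : I) : ℝ := (2 * x + μ.real (Iic x)) / 3

variable {μ : Measure I}

theorem slotLeft_nonneg (x : I) : 0 ≤ slotLeft μ x := by
  have := x.2.1
  unfold slotLeft
  positivity

theorem slotRight_le_one [IsProbabilityMeasure μ] (x : I) : slotRight μ x ≤ 1 := by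
  have : μ.real (Iic x) ≤ 1 := measureReal_le_one
  unfold slotRight
  linarith [x.2.2]

variable [IsFiniteMeasure μ]

theorem slotRight_sub_slotLeft (x : I) : slotRight μ x - slotLeft μ x = μ.real {x} / 3 := by
  have : μ.real (Iic x) = μ.real (Iio x) + μ.real {x} := by
    rw [← Iio_union_right, measureReal_union (by simp) (measurableSet_singleton x)]
  rw [slotLeft, slotRight, this]
  ring

theorem slotLeft_lt_slotRight {x : I} (hx : μ.real {x} ≠ 0) : slotLeft μ x < slotRight μ x :=
  sub_pos.1 (by rw [slotRight_sub_slotLeft]; positivity)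

theorem slotLeft_le_slotRight (x : I) : slotLeft μ x ≤ slotRight μ x :=
  sub_nonneg.1 (by rw [slotRight_sub_slotLeft]; positivity)

theorem sub_le_slotLeft_sub_slotRight {x y : I} (hxy : x < y) :
    (y : ℝ) - x ≤ (3 / 2 : ℝ≥0) * (slotLeft μ y - slotRight μ x) := by
  have : μ.real (Iic x) ≤ μ.real (Iio y) := measureReal_mono (Iic_subset_Iio.2 hxy)
  unfold slotLeft slotRight
  push_cast
  linarith

end Slots

section SlottedPath

/-- Only finitely many `E x` move further than `ε` away from `α x`, so near a jump of `c` the value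
`E (c s) s` is close to `α (c s)`. -/
theorem continuous_glue {S J X : Type*} [TopologicalSpace S] [TopologicalSpace J] [T1Space J]
    [PseudoMetricSpace X] {E : J → S → X} {α : J → X} {c : S → J} (hE : ∀ x, Continuous (E x))
    (hα : Continuous α) (hc : Continuous c) (hout : ∀ x s, c s ≠ x → E x s = α x)
    (hfin : ∀ ε > 0, {x | ∃ s, ε ≤ dist (E x s) (α x)}.Finite) :
    Continuous fun s => E (c s) s := by
  refine continuous_iff_continuousAt.2 fun t => Metric.continuousAt_iff'.2 fun ε hε => ?_
  have hε3 : 0 < ε / 3 := by positivity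
  have hfar : IsClosed ({x | ∃ s, ε / 3 ≤ dist (E x s) (α x)} \ {c t}) :=
    ((hfin _ hε3).subset sdiff_subset).isClosed
  filter_upwards [hc.continuousAt.eventually (hfar.isOpen_compl.mem_nhds fun h => h.2 rfl),
    Metric.continuousAt_iff'.1 (hE (c t)).continuousAt _ hε3,
    Metric.continuousAt_iff'.1 (hα.comp hc).continuousAt _ hε3] with s hnear hEs hαs
  by_cases hst : c s = c t
  · rw [hst]
    linarith
  · have hnear : dist (E (c s) s) (α (c s)) < ε / 3 :=
      lt_of_not_ge fun hle => hnear ⟨⟨s, hle⟩, hst⟩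
    rw [hout _ _ hst] at hEs
    calc dist (E (c s) s) (E (c t) t)
        ≤ dist (E (c s) s) (α (c s)) + dist (α (c s)) (α (c t)) + dist (α (c t)) (E (c t) t) :=
          dist_triangle4 ..
      _ < ε / 3 + ε / 3 + ε / 3 := add_lt_add (add_lt_add hnear hαs) hEs
      _ = ε := add_thirds ε

/-- The clamped affine map of the slot `[a, b]` onto `[0, 1]`; by `s / 0 = 0` it vanishes
identically if `a = b`. -/
noncomputable def slotParam (a b s : ℝ) : I := projIcc 0 1 zero_le_one ((s - a) / (b - a))

theorem continuous_slotParam (a b : ℝ) : Continuous (slotParam a b) :=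
  continuous_projIcc.comp ((continuous_id.sub continuous_const).div_const _)

theorem slotParam_left (a b : ℝ) : slotParam a b a = 0 := by
  rw [slotParam, sub_self, zero_div]
  exact projIcc_of_le_left _ le_rfl

theorem slotParam_eq_zero_or_one {a b s : ℝ} (hab : a ≤ b) (hs : s ∉ Icc a b) :
    slotParam a b s = 0 ∨ slotParam a b s = 1 := by
  rcases hab.eq_or_lt with rfl | hab
  · left
    rw [slotParam, sub_self, div_zero]
    exact projIcc_of_le_left _ le_rfl
  have hba : 0 < b - a := sub_pos.2 hab
  rcases lt_or_ge s a with hsa | has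
  · exact .inl (projIcc_of_le_left _ (div_nonpos_of_nonpos_of_nonneg (sub_nonpos.2 hsa.le) hba.le))
  · have hbs : b ≤ s := le_of_not_ge fun hsb => hs ⟨has, hsb⟩
    exact .inr (projIcc_of_right_le _ ((one_le_div hba).2 (sub_le_sub_right hbs a)))

theorem surjOn_slotParam {a b : ℝ} (hab : a < b) : SurjOn (slotParam a b) (Icc a b) univ := by
  intro t _
  have hba : 0 < b - a := sub_pos.2 hab
  refine ⟨a + t * (b - a), ⟨?_, ?_⟩, ?_⟩
  · nlinarith [t.2.1]
  · nlinarith [t.2.2]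
  · rw [slotParam, add_sub_cancel_left, mul_div_cancel_right₀ _ hba.ne', projIcc_val]

variable {X : Type*} [MetricSpace X] {α : I → X} {r : X → I}

/-- The detour at `α x`: the path that waits at `α x` outside the slot of `x`, and inside it runs
through `ψ` retracted to the fibre of `r` over `x`. -/
noncomputable def excursion (μ : MeasureTheory.Measure I) (α : I → X) (r : X → I) (ψ : I → X)
    (x : I) (s : ℝ) : X :=
  fibreRetraction α r x (ψ (slotParam (slotLeft μ x) (slotRight μ x) s))

namespace ArcRetraction

variable {u v : I} {ψ : Path (α u) (α v)} {μ : MeasureTheory.Measure I}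

theorem continuous_excursion (h : ArcRetraction α r) (x : I) : Continuous (excursion μ α r ψ x) :=
  (h.continuous_fibreRetraction x).comp (ψ.continuous.comp (continuous_slotParam _ _))

theorem retraction_excursion (h : ArcRetraction α r) (x : I) (s : ℝ) :
    r (excursion μ α r ψ x s) = x :=
  h.retraction_fibreRetraction x _

variable [MeasureTheory.IsFiniteMeasure μ]

theorem excursion_of_notMem (h : ArcRetraction α r) {x : I} {s : ℝ}
    (hs : s ∉ Icc (slotLeft μ x) (slotRight μ x)) : excursion μ α r ψ x s = α x := by
  unfold excursion
  rcases slotParam_eq_zero_or_one (slotLeft_le_slotRight x) hs with hp | hp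
  · rw [hp, ψ.source, h.fibreRetraction_arc]
  · rw [hp, ψ.target, h.fibreRetraction_arc]

theorem exists_excursion_eq (h : ArcRetraction α r) (hψ : Function.Surjective ψ)
    (hμ : ∀ x ∈ r '' {y | y ≠ α (r y)}, μ.real {x} ≠ 0) (y : X) :
    ∃ s ∈ Icc (slotLeft μ (r y)) (slotRight μ (r y)), excursion μ α r ψ (r y) s = y := by
  unfold excursion
  by_cases hy : y = α (r y)
  · refine ⟨_, left_mem_Icc.2 (slotLeft_le_slotRight _), ?_⟩
    rw [slotParam_left, ψ.source, h.fibreRetraction_arc, ← hy]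
  · obtain ⟨t, ht⟩ := hψ y
    obtain ⟨s, hs, hst⟩ := surjOn_slotParam
      (slotLeft_lt_slotRight (hμ _ (mem_image_of_mem r hy))) (mem_univ t)
    exact ⟨s, hs, by rw [hst, ht, fibreRetraction, if_pos rfl]⟩

theorem exists_lipschitz_path [CompactSpace X] (h : ArcRetraction α r)
    (hψ : Function.Surjective ψ) :
    ∃ φ : ℝ → X, Continuous φ ∧ φ '' Icc 0 1 = univ ∧ LipschitzWith (3 / 2) (r ∘ φ) := by
  obtain ⟨μ, _, hμ⟩ := exists_isProbabilityMeasure_of_countable h.countable_nontrivial_fibres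
  obtain ⟨c, hc, hslot⟩ :=
    exists_lipschitz_collapse fun _ _ hxy => sub_le_slotLeft_sub_slotRight (μ := μ) hxy
  have hout (x : I) (s : ℝ) (hs : c s ≠ x) : excursion μ α r ψ x s = α x :=
    h.excursion_of_notMem (mt (hslot x s) hs)
  have hfin (ε : ℝ) (hε : 0 < ε) :
      {x | ∃ s, ε ≤ dist (excursion μ α r ψ x s) (α x)}.Finite :=
    (h.finite_far_fibreRetraction hε).subset fun _ ⟨_, hs⟩ => ⟨_, hs⟩
  refine ⟨fun s => excursion μ α r ψ (c s) s, continuous_glue h.continuous_excursion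
    h.continuous_arc hc.continuous hout hfin, eq_univ_of_forall fun y => ?_, ?_⟩
  · obtain ⟨s, hs, hsy⟩ := h.exists_excursion_eq hψ hμ y
    refine ⟨s, ⟨(slotLeft_nonneg _).trans hs.1, hs.2.trans (slotRight_le_one _)⟩, ?_⟩
    simp only [hslot _ s hs, hsy]
  · convert hc using 1
    exact funext fun s => h.retraction_excursion _ s

end ArcRetraction

end SlottedPath

/-! ### Contractions through the arc -/

section Contraction

open scoped NNReal

theorem dist_foldr_le {X Y : Type*} [PseudoMetricSpace Y] {r : X → Y} {F : Set (X → X)} {c : ℝ≥0}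
    (hF : ∀ f ∈ F, ∀ y z, dist (r (f y)) (r (f z)) ≤ c * dist (r y) (r z)) {l : List (X → X)}
    (hl : ∀ f ∈ l, f ∈ F) (y z : X) :
    dist (r (l.foldr (· ∘ ·) id y)) (r (l.foldr (· ∘ ·) id z)) ≤
      c ^ l.length * dist (r y) (r z) := by
  induction l with
  | nil => simp
  | cons f l ih =>
    rw [List.forall_mem_cons] at hl
    calc _ ≤ c * dist (r (l.foldr (· ∘ ·) id y)) (r (l.foldr (· ∘ ·) id z)) := hF f hl.1 _ _
      _ ≤ c * (c ^ l.length * dist (r y) (r z)) := by gcongr; exact ih hl.2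
      _ = c ^ (f :: l).length * dist (r y) (r z) := by rw [List.length_cons]; ring

theorem topContractive_image_comp {X Y : Type*} [MetricSpace X] [PseudoMetricSpace Y]
    [CompactSpace Y] {r : X → Y} {Φ : Set (Y → X)} {c : ℝ≥0} (hfin : Φ.Finite)
    (hΦ : ∀ φ ∈ Φ, Continuous φ) (hc : c < 1) (hlip : ∀ φ ∈ Φ, LipschitzWith c (r ∘ φ)) :
    TopContractive ((· ∘ r) '' Φ) := by
  intro ε hε
  have hunif : ∀ᶠ p in uniformity Y, ∀ φ ∈ Φ, dist (φ p.1) (φ p.2) < ε / 2 :=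
    (eventually_all_finite hfin).2 fun φ hφ =>
      (CompactSpace.uniformContinuous_of_continuous (hΦ φ hφ)).eventually
        (Metric.dist_mem_uniformity (half_pos hε))
  obtain ⟨δ, hδ, hδΦ⟩ := Metric.mem_uniformity_dist.1 hunif
  have hpow : Tendsto (fun k => (c : ℝ) ^ k * Metric.diam (univ : Set Y)) atTop (𝓝 0) := by
    simpa only [zero_mul] using
      (tendsto_pow_atTop_nhds_zero_of_lt_one c.coe_nonneg hc).mul_const (Metric.diam (univ : Set Y))
  obtain ⟨k, hk⟩ := (hpow.eventually_lt_const hδ).exists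
  refine ⟨k + 1, fun l hl hlen => ?_⟩
  obtain ⟨f, l, rfl⟩ := List.exists_cons_of_length_eq_add_one hlen
  rw [List.forall_mem_cons] at hl
  obtain ⟨⟨φ, hφ, rfl⟩, hl⟩ := hl
  refine (Metric.diam_le_of_forall_dist_le (half_pos hε).le ?_).trans_lt (half_lt_self hε)
  rintro _ ⟨y, rfl⟩ _ ⟨z, rfl⟩
  refine (hδΦ (lt_of_le_of_lt ?_ hk) φ hφ).le
  have hF : ∀ f ∈ (· ∘ r) '' Φ, ∀ y z, dist (r (f y)) (r (f z)) ≤ c * dist (r y) (r z) := by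
    rintro _ ⟨φ, hφ, rfl⟩ y z
    exact (hlip φ hφ).dist_le_mul _ _
  calc _ ≤ c ^ l.length * dist (r y) (r z) := dist_foldr_le hF hl y z
    _ ≤ c ^ k * Metric.diam (univ : Set Y) := by
      rw [List.length_cons, Nat.add_right_cancel_iff] at hlen
      rw [hlen]
      gcongr
      exact Metric.dist_le_diam_of_mem isCompact_univ.isBounded (mem_univ _) (mem_univ _)

theorem ArcRetraction.exists_topContractive_pair {X : Type*} [MetricSpace X] [CompactSpace X]
    {α : I → X} {r : X → I} (h : ArcRetraction α r) {u v : I} {ψ : Path (α u) (α v)}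
    (hψ : Function.Surjective ψ) :
    ∃ f g : X → X, Continuous f ∧ Continuous g ∧ TopContractive {f, g} ∧
      range f ∪ range g = univ := by
  obtain ⟨φ, hφ, hsurj, hlip⟩ := h.exists_lipschitz_path hψ
  let half (d : ℝ) (t : I) : X := φ ((d + t) / 2)
  have hhalf (d : ℝ) : Continuous (half d) := by fun_prop
  have hhalf_lip (d : ℝ) : LipschitzWith (3 / 4) (r ∘ half d) := by
    refine .of_dist_le_mul fun s t => (hlip.dist_le_mul _ _).trans_eq ?_
    rw [Real.dist_eq, Subtype.dist_eq, Real.dist_eq, ← sub_div, add_sub_add_left_eq_sub, abs_div,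
      abs_two]
    push_cast
    ring
  refine ⟨half 0 ∘ r, half 1 ∘ r, (hhalf 0).comp h.continuous_retraction,
    (hhalf 1).comp h.continuous_retraction, ?_, eq_univ_of_forall fun y => ?_⟩
  · rw [← image_pair (· ∘ r)]
    refine topContractive_image_comp (c := 3 / 4) (toFinite _) ?_ (by norm_num) ?_
    · rintro _ (rfl | rfl) <;> exact hhalf _
    · rintro _ (rfl | rfl) <;> exact hhalf_lip _
  · obtain ⟨s, hs, rfl⟩ := hsurj.symm ▸ mem_univ y
    have hhit {d : ℝ} (hd : 2 * s - d ∈ I) : φ s ∈ range (half d ∘ r) := by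
      refine ⟨α ⟨2 * s - d, hd⟩, ?_⟩
      simp only [half, Function.comp_apply, h.retraction_arc]
      ring_nf
    rcases le_total s (1 / 2) with hle | hle
    · exact .inl (hhit ⟨by linarith [hs.1], by linarith⟩)
    · exact .inr (hhit ⟨by linarith, by linarith [hs.2]⟩)

end Contraction

/-- Every nondegenerate dendrite (a Peano continuum containing no topological copy of a
simple closed curve) is a topological fractal with witnessing number two. -/
theorem dendrite_is_topological_fractal_with_two_maps
    (D : Type*) [MetricSpace D] [CompactSpace D] [ConnectedSpace D]
    [LocallyConnectedSpace D] [Nonempty D] [Nontrivial D]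
    (hD : ¬ ∃ f : AddCircle (1 : ℝ) → D, Topology.IsEmbedding f) :
    ∃ f g : D → D, Continuous f ∧ Continuous g ∧
      TopContractive {f, g} ∧ Set.range f ∪ Set.range g = Set.univ := by
  obtain ⟨a, b, hab⟩ := exists_pair_ne D
  obtain ⟨γ, -⟩ := exists_surjective_path a b
  obtain ⟨α, hα, -⟩ := exists_injective_path γ hab
  obtain ⟨r, hr⟩ := exists_arcRetraction hD α.continuous hα
  obtain ⟨ψ, hψ⟩ := exists_surjective_path (α 0) (α 1)
  exact hr.exists_topContractive_pair hψ
end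

section
/- Let X be a compact metric space, let f_1, ..., f_n and g_1, ..., g_m be continuous self-maps of X. Suppose that the family {f_1, ..., f_n} is topologically contractive and that for every map f that is a (possibly empty, i.e., the identity) finite composition of maps from {f_1, ..., f_n} and for all 1 ≤ i, j ≤ m, the composition g_i ∘ f ∘ g_j is a constant map. Then the family {f_1, ..., f_n, g_1, ..., g_m} is topologically contractive. -/
/-!
Cut a word of length `k + k'` over `F ∪ G` into a prefix of length `k` and a suffix of length `k'`.
If the prefix is a word over `F`, its image is already small once `k` is large. If the suffix is a
word over `F`, its image is as small as we like once `k'` is large, and the prefix cannot enlarge it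
much, because the prefixes of the fixed length `k` are uniformly equicontinuous. Otherwise both
parts contain a letter of `G`; the last one of the prefix and the first one of the suffix are
separated by a word over `F`, so the composition is constant.
-/

/-- The composition `f₁ ∘ ⋯ ∘ fₖ` of a word `[f₁, …, fₖ]` of self-maps, in the form in which it
occurs in `TopContractive`. -/
def wordMap {X : Type*} (l : List (X → X)) : X → X :=
  l.foldr (· ∘ ·) id

theorem wordMap_append {X : Type*} (a b : List (X → X)) :
    wordMap (a ++ b) = wordMap a ∘ wordMap b := by
  induction a with
  | nil => rfl
  | cons f a ih => exact congrArg (f ∘ ·) ih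

theorem exists_forall_apply_wordMap_wordMap_eq {X : Type*} {F G : Set (X → X)}
    (hconst : ∀ l : List (X → X), (∀ f ∈ l, f ∈ F) →
      ∀ g ∈ G, ∀ g' ∈ G, ∃ c, ∀ x, g (wordMap l (g' x)) = c)
    {g : X → X} (hg : g ∈ G) {a b : List (X → X)} (ha : ∀ f ∈ a, f ∈ F)
    (hb : ∀ f ∈ b, f ∈ F ∪ G) (hbF : ¬∀ f ∈ b, f ∈ F) :
    ∃ c, ∀ x, g (wordMap a (wordMap b x)) = c := by
  induction b generalizing a with
  | nil => simp at hbF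
  | cons f b ih =>
    obtain ⟨hf, hb⟩ := List.forall_mem_cons.mp hb
    by_cases hfF : f ∈ F
    · have haf : ∀ f' ∈ a ++ [f], f' ∈ F :=
        List.forall_mem_append.mpr ⟨ha, List.forall_mem_singleton.mpr hfF⟩
      have hbF : ¬∀ f' ∈ b, f' ∈ F := fun h => hbF (List.forall_mem_cons.mpr ⟨hfF, h⟩)
      obtain ⟨c, hc⟩ := ih haf hb hbF
      rw [wordMap_append] at hc
      exact ⟨c, hc⟩
    · obtain ⟨c, hc⟩ := hconst a ha g hg f (hf.resolve_left hfF)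
      exact ⟨c, fun x => hc (wordMap b x)⟩

theorem exists_forall_wordMap_append_eq {X : Type*} {F G : Set (X → X)}
    (hconst : ∀ l : List (X → X), (∀ f ∈ l, f ∈ F) →
      ∀ g ∈ G, ∀ g' ∈ G, ∃ c, ∀ x, g (wordMap l (g' x)) = c)
    {a b : List (X → X)} (ha : ∀ f ∈ a, f ∈ F ∪ G) (haF : ¬∀ f ∈ a, f ∈ F)
    (hb : ∀ f ∈ b, f ∈ F ∪ G) (hbF : ¬∀ f ∈ b, f ∈ F) :
    ∃ c, ∀ x, wordMap (a ++ b) x = c := by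
  induction a with
  | nil => simp at haF
  | cons f a ih =>
    obtain ⟨hf, ha⟩ := List.forall_mem_cons.mp ha
    by_cases haF' : ∀ f' ∈ a, f' ∈ F
    · have hfG : f ∈ G := hf.resolve_left fun h => haF (List.forall_mem_cons.mpr ⟨h, haF'⟩)
      obtain ⟨c, hc⟩ := exists_forall_apply_wordMap_wordMap_eq hconst hfG haF' hb hbF
      exact ⟨c, fun x => (congrFun (wordMap_append (f :: a) b) x).trans (hc x)⟩
    · obtain ⟨c, hc⟩ := ih ha haF'
      exact ⟨f c, fun x => congrArg f (hc x)⟩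

open Uniformity in
theorem uniformEquicontinuous_wordMap_of_length_eq {X : Type*} [UniformSpace X]
    {F : Set (X → X)} (hF : F.UniformEquicontinuous) (k : ℕ) :
    (wordMap '' {l | (∀ f ∈ l, f ∈ F) ∧ l.length = k}).UniformEquicontinuous := by
  suffices hwords : ∀ U ∈ 𝓤 X, ∀ᶠ p in 𝓤 X, ∀ l : List (X → X), (∀ f ∈ l, f ∈ F) → l.length = k →
      (wordMap l p.1, wordMap l p.2) ∈ U by
    intro U hU
    filter_upwards [hwords U hU] with p hp
    rintro ⟨_, l, ⟨hl, hlen⟩, rfl⟩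
    exact hp l hl hlen
  induction k with
  | zero =>
    intro U hU
    filter_upwards [hU] with p hp l _ hlen
    obtain rfl := List.length_eq_zero_iff.mp hlen
    exact hp
  | succ k ih =>
    intro U hU
    filter_upwards [ih _ (hF U hU)] with p hp
    rintro (_ | ⟨f, l⟩) hl hlen
    · simp at hlen
    · obtain ⟨hf, hl⟩ := List.forall_mem_cons.mp hl
      exact hp l hl (Nat.succ.inj hlen) ⟨f, hf⟩

theorem uniformEquicontinuous_of_finite_of_continuous {X Y : Type*} [UniformSpace X]
    [CompactSpace X] [UniformSpace Y] {F : Set (X → Y)} (hF : F.Finite)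
    (hc : ∀ f ∈ F, Continuous f) : F.UniformEquicontinuous := by
  have := hF.to_subtype
  exact uniformEquicontinuous_finite.mpr fun f =>
    CompactSpace.uniformContinuous_of_continuous (hc f f.2)

theorem topContractive_union_of_constant_compositions_general
    {X : Type*} [MetricSpace X] [BoundedSpace X] {F G : Set (X → X)}
    (hequi : (F ∪ G).UniformEquicontinuous) (hcontr : TopContractive F)
    (hconst : ∀ l : List (X → X), (∀ f ∈ l, f ∈ F) →
      ∀ g ∈ G, ∀ g' ∈ G, ∃ c, ∀ x, g (wordMap l (g' x)) = c) :
    TopContractive (F ∪ G) := by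
  intro ε hε
  obtain ⟨k, hk⟩ := hcontr ε hε
  obtain ⟨δ, hδ, hprefix⟩ := Metric.uniformEquicontinuous_iff.mp
    (uniformEquicontinuous_wordMap_of_length_eq hequi k) (ε / 2) (half_pos hε)
  obtain ⟨k', hk'⟩ := hcontr δ hδ
  refine ⟨k + k', fun l hl hlen => ?_⟩
  obtain ⟨a, b, rfl, hak, hbk⟩ : ∃ a b, l = a ++ b ∧ a.length = k ∧ b.length = k' :=
    ⟨l.take k, l.drop k, (l.take_append_drop k).symm, by simp [hlen], by simp [hlen]⟩
  obtain ⟨ha, hb⟩ := List.forall_mem_append.mp hl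
  change Metric.diam (Set.range (wordMap (a ++ b))) < ε
  by_cases haF : ∀ f ∈ a, f ∈ F
  · rw [wordMap_append]
    exact (Metric.diam_mono (Set.range_comp_subset_range _ _) (.all _)).trans_lt (hk a haF hak)
  by_cases hbF : ∀ f ∈ b, f ∈ F
  · refine (Metric.diam_le_of_forall_dist_le (half_pos hε).le ?_).trans_lt (half_lt_self hε)
    rintro _ ⟨x, rfl⟩ _ ⟨y, rfl⟩
    rw [wordMap_append]
    have hxy : dist (wordMap b x) (wordMap b y) < δ :=
      (Metric.dist_le_diam_of_mem (.all _) (Set.mem_range_self x)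
        (Set.mem_range_self y)).trans_lt (hk' b hbF hbk)
    exact (hprefix _ _ hxy ⟨_, Set.mem_image_of_mem _ ⟨ha, hak⟩⟩).le
  · obtain ⟨c, hc⟩ := exists_forall_wordMap_append_eq hconst ha haF hb hbF
    rwa [Metric.diam_subsingleton]
    rintro _ ⟨x, rfl⟩ _ ⟨y, rfl⟩
    rw [hc, hc]

/-- If `{f_1, …, f_n}` is topologically contractive and `g_i ∘ f ∘ g_j` is constant for
every finite (possibly empty) composition `f` of maps from `{f_1, …, f_n}` and all
`i, j`, then `{f_1, …, f_n, g_1, …, g_m}` is topologically contractive. -/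
theorem topContractive_union_of_constant_compositions
    {X : Type*} [MetricSpace X] [CompactSpace X]
    {n m : ℕ} (f : Fin n → X → X) (g : Fin m → X → X)
    (hfc : ∀ i, Continuous (f i)) (hgc : ∀ j, Continuous (g j))
    (hcontr : TopContractive (Set.range f))
    (hconst : ∀ l : List (X → X), (∀ h ∈ l, h ∈ Set.range f) →
      ∀ i j, ∃ c : X, ∀ x, g i ((l.foldr (· ∘ ·) id) (g j x)) = c) :
    TopContractive (Set.range f ∪ Set.range g) :=
  topContractive_union_of_constant_compositions_general
    (uniformEquicontinuous_of_finite_of_continuous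
      ((Set.finite_range f).union (Set.finite_range g)) (by simp [or_imp, forall_and, hfc, hgc]))
    hcontr fun l hl => Set.forall_mem_range.mpr fun i => Set.forall_mem_range.mpr (hconst l hl i)
end

section
/- Let X be a Peano continuum and let K_n ⊆ X, for n ∈ ℕ, be pairwise disjoint subcontinua each of whose topological boundaries has at most 13 points. Then diam K_n converges to zero as n → ∞. -/
/-!
Cover `X` by finitely many connected sets of diameter less than `δ`. Each of them lies in only
finitely many `K i`, so for all other `i` every piece meeting `K i` also leaves it, hence crosses
its frontier. Thus `K i` lies in the `δ`-thickening of at most `N` points, and being connected it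
has diameter at most `2 * N * δ`: the distance from a point `x ∈ K i` maps `K i` onto a set
containing `[0, dist x y]` for each `y ∈ K i` and covered by `N` intervals of length `2 * δ`.
-/

open Filter MeasureTheory Metric Set

theorem inter_frontier_nonempty_of_isPreconnected {X : Type*} [TopologicalSpace X] {s u : Set X}
    (hu : IsPreconnected u) (hmeet : (u ∩ s).Nonempty) (hleave : ¬ u ⊆ s) :
    (u ∩ frontier s).Nonempty := by
  rw [← not_disjoint_iff_nonempty_inter]
  intro hdisj
  have hcover : u ⊆ interior s ∪ interior sᶜ := by
    rwa [← compl_frontier_eq_union_interior, subset_compl_iff_disjoint_right]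
  have hsides : Disjoint (interior s) (interior sᶜ) :=
    disjoint_compl_right.mono interior_subset interior_subset
  rcases hu.subset_or_subset isOpen_interior isOpen_interior hsides hcover with hin | hout
  · exact hleave (hin.trans interior_subset)
  · obtain ⟨x, hxu, hxs⟩ := hmeet
    exact interior_subset (hout hxu) hxs

theorem finite_setOf_mem_of_pairwise_disjoint {ι X : Type*} {K : ι → Set X}
    (hK : Pairwise fun i j => Disjoint (K i) (K j)) (x : X) : {i | x ∈ K i}.Finite :=
  Subsingleton.finite fun _ hi _ hj => hK.eq (not_disjoint_iff.2 ⟨x, hi, hj⟩)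

theorem eventually_cofinite_forall_not_subset {ι X : Type*} {K : ι → Set X}
    (hK : ∀ x, {i | x ∈ K i}.Finite) {𝒰 : Set (Set X)} (hfin : 𝒰.Finite)
    (hne : ∀ U ∈ 𝒰, U.Nonempty) : ∀ᶠ i in cofinite, ∀ U ∈ 𝒰, ¬ U ⊆ K i := by
  rw [eventually_all_finite hfin]
  intro U hU
  obtain ⟨x, hx⟩ := hne U hU
  filter_upwards [(hK x).eventually_cofinite_notMem] with i hi hUi using hi (hUi hx)

section PseudoMetricSpace

variable {X : Type*} [PseudoMetricSpace X]

theorem ofReal_dist_le_volume_dist_image {s : Set X} (hs : IsPreconnected s) {x y : X}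
    (hx : x ∈ s) (hy : y ∈ s) : ENNReal.ofReal (dist x y) ≤ volume (dist x '' s) := by
  have himage : IsPreconnected (dist x '' s) :=
    hs.image _ (continuous_const.dist continuous_id).continuousOn
  calc ENNReal.ofReal (dist x y) = volume (Icc 0 (dist x y)) := by rw [Real.volume_Icc, sub_zero]
    _ ≤ volume (dist x '' s) :=
      measure_mono (himage.Icc_subset ⟨x, hx, dist_self x⟩ (mem_image_of_mem _ hy))

theorem volume_image_thickening_le {f : X → ℝ} (hf : LipschitzWith 1 f) {E : Set X}
    (hE : E.Finite) (δ : ℝ) :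
    volume (f '' thickening δ E) ≤ E.ncard * ENNReal.ofReal (2 * δ) := by
  lift E to Finset X using hE
  have hcover : f '' thickening δ E ⊆ ⋃ p ∈ E, ball (f p) δ := by
    rintro _ ⟨z, hz, rfl⟩
    obtain ⟨p, hp, hzp⟩ := mem_thickening_iff.1 hz
    have hfzp : dist (f z) (f p) ≤ dist z p := by simpa using hf.dist_le_mul z p
    exact mem_biUnion hp (hfzp.trans_lt hzp)
  calc volume (f '' thickening δ E) ≤ ∑ p ∈ E, volume (ball (f p) δ) :=
        (measure_mono hcover).trans (measure_biUnion_finset_le _ _)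
    _ = (E : Set X).ncard * ENNReal.ofReal (2 * δ) := by
      simp only [Real.volume_ball, Finset.sum_const, nsmul_eq_mul, ncard_coe_finset]

theorem diam_le_of_isPreconnected_of_subset_thickening {s E : Set X} {δ : ℝ}
    (hs : IsPreconnected s) (hE : E.Finite) (hδ : 0 ≤ δ) (hsE : s ⊆ thickening δ E) :
    diam s ≤ E.ncard * (2 * δ) := by
  refine diam_le_of_forall_dist_le (by positivity) fun x hx y hy => ?_
  rw [← ENNReal.ofReal_le_ofReal_iff (by positivity)]
  calc ENNReal.ofReal (dist x y) ≤ volume (dist x '' s) :=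
        ofReal_dist_le_volume_dist_image hs hx hy
    _ ≤ volume (dist x '' thickening δ E) := measure_mono (image_mono hsE)
    _ ≤ E.ncard * ENNReal.ofReal (2 * δ) :=
      volume_image_thickening_le (LipschitzWith.dist_right x) hE δ
    _ = ENNReal.ofReal (E.ncard * (2 * δ)) := by
      rw [ENNReal.ofReal_mul E.ncard.cast_nonneg, ENNReal.ofReal_natCast]

/-- Sierpiński's property S: for each `ε > 0` the space is a union of finitely many connected sets
of diameter less than `ε`. Smallness is expressed through pairwise distances because `Metric.diam`
vanishes on unbounded sets. -/
def HasPropertyS (X : Type*) [PseudoMetricSpace X] : Prop :=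
  ∀ ε > 0, ∃ 𝒰 : Set (Set X), 𝒰.Finite ∧ ⋃₀ 𝒰 = univ ∧
    ∀ U ∈ 𝒰, IsConnected U ∧ ∀ x ∈ U, ∀ y ∈ U, dist x y < ε

theorem hasPropertyS_of_compactSpace [CompactSpace X] [LocallyConnectedSpace X] :
    HasPropertyS X := by
  intro ε hε
  have hsmall (x : X) : ∃ V ⊆ ball x (ε / 2), IsOpen V ∧ x ∈ V ∧ IsConnected V :=
    locallyConnectedSpace_iff_subsets_isOpen_isConnected.1 inferInstance x _
      (ball_mem_nhds x (half_pos hε))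
  choose V hball hopen hmem hconn using hsmall
  obtain ⟨t, ht⟩ := CompactSpace.elim_nhds_subcover V fun x => (hopen x).mem_nhds (hmem x)
  refine ⟨V '' t, t.finite_toSet.image V, by simpa using ht, ?_⟩
  rintro _ ⟨c, -, rfl⟩
  refine ⟨hconn c, fun x hx y hy => ?_⟩
  calc dist x y ≤ dist x c + dist y c := dist_triangle_right x y c
    _ < ε / 2 + ε / 2 := add_lt_add (hball c hx) (hball c hy)
    _ = ε := add_halves ε

theorem HasPropertyS.eventually_subset_thickening_frontier (hX : HasPropertyS X) {ι : Type*}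
    {K : ι → Set X} (hK : ∀ x, {i | x ∈ K i}.Finite) {δ : ℝ} (hδ : 0 < δ) :
    ∀ᶠ i in cofinite, K i ⊆ thickening δ (frontier (K i)) := by
  obtain ⟨𝒰, hfin, hcover, h𝒰⟩ := hX δ hδ
  filter_upwards [eventually_cofinite_forall_not_subset hK hfin fun U hU => (h𝒰 U hU).1.nonempty]
    with i hleave y hyK
  obtain ⟨U, hU, hyU⟩ := hcover.ge (mem_univ y)
  obtain ⟨hconn, hsmall⟩ := h𝒰 U hU
  obtain ⟨p, hpU, hp⟩ := inter_frontier_nonempty_of_isPreconnected hconn.isPreconnected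
    ⟨y, hyU, hyK⟩ (hleave U hU)
  exact mem_thickening_iff.2 ⟨p, hp, hsmall y hyU p hpU⟩

theorem diam_tendsto_zero_of_pairwise_disjoint_subcontinua_general (hX : HasPropertyS X)
    {ι : Type*} {K : ι → Set X} (hconn : ∀ i, IsPreconnected (K i))
    (hK : ∀ x, {i | x ∈ K i}.Finite) {N : ℕ} (hN : ∀ i, (frontier (K i)).encard ≤ N) :
    Tendsto (fun i => diam (K i)) cofinite (nhds 0) := by
  refine tendsto_order.2 ⟨fun a ha => .of_forall fun i => ha.trans_le diam_nonneg, fun ε hε => ?_⟩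
  obtain ⟨δ, hδ, hδε⟩ := exists_pos_mul_lt hε (N * 2 : ℝ)
  filter_upwards [hX.eventually_subset_thickening_frontier hK hδ] with i hi
  obtain ⟨hfin, hcard⟩ := encard_le_coe_iff_finite_ncard_le.1 (hN i)
  calc diam (K i) ≤ (frontier (K i)).ncard * (2 * δ) :=
        diam_le_of_isPreconnected_of_subset_thickening (hconn i) hfin hδ.le hi
    _ ≤ N * (2 * δ) := by gcongr
    _ < ε := by rwa [← mul_assoc]

end PseudoMetricSpace

/-- In a Peano continuum, if `K n`, `n ∈ ℕ`, are pairwise disjoint subcontinua whose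
boundaries have at most 13 points, then `diam (K n)` converges to zero. -/
theorem diam_tendsto_zero_of_pairwise_disjoint_subcontinua
    {X : Type*} [MetricSpace X] [CompactSpace X] [ConnectedSpace X]
    [LocallyConnectedSpace X] [Nonempty X]
    (K : ℕ → Set X)
    (hne : ∀ n, (K n).Nonempty)
    (hcomp : ∀ n, IsCompact (K n))
    (hconn : ∀ n, IsConnected (K n))
    (hdisj : Pairwise fun m n => Disjoint (K m) (K n))
    (hbd : ∀ n, (frontier (K n)).encard ≤ 13) :
    Filter.Tendsto (fun n => Metric.diam (K n)) Filter.atTop (nhds 0) := by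
  rw [← Nat.cofinite_eq_atTop]
  exact diam_tendsto_zero_of_pairwise_disjoint_subcontinua_general hasPropertyS_of_compactSpace
    (fun n => (hconn n).isPreconnected)
    (finite_setOf_mem_of_pairwise_disjoint hdisj) hbd
end

section
/- Let X be a Peano continuum and let U ⊆ X be a nonempty open connected set whose topological boundary is finite. Then the closure of U is a Peano (i.e., locally connected) subcontinuum of X. -/
open Set Filter Topology

/-!
Shrink a connected neighbourhood `C` of `x ∈ s` until `x` is the only point of `frontier s` it can
contain. Away from `x`, the set `C` then meets `s` only in `interior s`, so relatively open pieces
of `C ∩ s` avoiding `x` are relatively open in `C`. Hence the trace `C ∩ s` inherits the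
connectedness of `C`.
-/

section DiscreteFrontier

variable {X : Type*} [TopologicalSpace X] {s : Set X}

theorem isPreconnected_inter_of_inter_frontier_subset_singleton {C : Set X} {x : X}
    (hC : IsPreconnected C) (hxC : x ∈ C) (hxs : x ∈ s) (hfr : C ∩ frontier s ⊆ {x}) :
    IsPreconnected (C ∩ s) := by
  intro u v hu hv hcover hu_ne hv_ne
  wlog hxu : x ∈ u generalizing u v
  · rw [inter_comm u v]
    exact this v u hv hu (union_comm u v ▸ hcover) hv_ne hu_ne
      ((hcover ⟨hxC, hxs⟩).resolve_left hxu)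
  obtain ⟨y, ⟨hyC, hys⟩, hyv⟩ := hv_ne
  by_cases hy_int : y ∈ interior s
  · have hC_cover : C ⊆ (u ∪ (closure s)ᶜ) ∪ (v ∩ interior s) := by
      intro z hzC
      by_cases hz_cl : z ∈ closure s
      · by_cases hz_int : z ∈ interior s
        · exact (hcover ⟨hzC, interior_subset hz_int⟩).imp Or.inl fun hzv => ⟨hzv, hz_int⟩
        · have hzx : z = x := hfr ⟨hzC, hz_cl, hz_int⟩
          exact Or.inl (Or.inl (hzx ▸ hxu))
      · exact Or.inl (Or.inr hz_cl)
    obtain ⟨z, hzC, hzu, hzv, hz_int⟩ := hC _ _ (hu.union isClosed_closure.isOpen_compl)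
      (hv.inter isOpen_interior) hC_cover ⟨x, hxC, Or.inl hxu⟩ ⟨y, hyC, hyv, hy_int⟩
    have hzs : z ∈ s := interior_subset hz_int
    exact ⟨z, ⟨hzC, hzs⟩, hzu.resolve_right (not_not_intro (subset_closure hzs)), hzv⟩
  · have hyx : y = x := hfr ⟨hyC, subset_closure hys, hy_int⟩
    exact ⟨y, ⟨hyC, hys⟩, hyx ▸ hxu, hyv⟩

theorem exists_mem_nhds_inter_subset_singleton_of_isDiscrete (hs : IsClosed s)
    (hd : IsDiscrete s) (x : X) : ∃ W ∈ 𝓝 x, W ∩ s ⊆ {x} := by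
  have hdisj : Disjoint (𝓝[≠] x) (𝓟 s) := isClosed_and_discrete_iff.mp ⟨hs, hd⟩ x
  obtain ⟨W, hW, hW_sub⟩ :=
    mem_nhdsWithin_iff_exists_mem_nhds_inter.mp (disjoint_principal_right.mp hdisj)
  exact ⟨W, hW, fun y hy => by_contra fun hyx => hW_sub ⟨hy.1, hyx⟩ hy.2⟩

theorem locallyConnectedSpace_of_isDiscrete_frontier [LocallyConnectedSpace X]
    (hd : IsDiscrete (frontier s)) : LocallyConnectedSpace s := by
  refine locallyConnectedSpace_iff_connected_subsets.mpr fun x V hV => ?_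
  obtain ⟨N, hN, hNV⟩ := (mem_nhds_induced _ x V).mp hV
  obtain ⟨W, hW, hW_fr⟩ :=
    exists_mem_nhds_inter_subset_singleton_of_isDiscrete isClosed_frontier hd (x : X)
  obtain ⟨C, hC_nhds, hC, hC_sub⟩ :=
    locallyConnectedSpace_iff_connected_subsets.mp ‹_› (x : X) (N ∩ W) (inter_mem hN hW)
  have hCs : IsPreconnected (C ∩ s) :=
    isPreconnected_inter_of_inter_frontier_subset_singleton hC (mem_of_mem_nhds hC_nhds) x.2
      fun y hy => hW_fr ⟨(hC_sub hy.1).2, hy.2⟩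
  refine ⟨Subtype.val ⁻¹' C,
    preimage_coe_mem_nhds_subtype.mpr (mem_nhdsWithin_of_mem_nhds hC_nhds), ?_,
    fun y hy => hNV (hC_sub hy).1⟩
  rwa [← IsInducing.subtypeVal.isPreconnected_image, Subtype.image_preimage_coe, inter_comm]

theorem closure_of_open_connected_finite_boundary_is_peano_subcontinuum_general
    [CompactSpace X] [LocallyConnectedSpace X] (hc : IsConnected s)
    (hd : IsDiscrete (frontier s)) :
    IsCompact (closure s) ∧ IsConnected (closure s) ∧ LocallyConnectedSpace (closure s) :=
  ⟨isClosed_closure.isCompact, hc.closure,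
    locallyConnectedSpace_of_isDiscrete_frontier (hd.mono frontier_closure_subset)⟩

end DiscreteFrontier

/-- In a Peano continuum, the closure of a nonempty open connected set with finite
boundary is a Peano (locally connected) subcontinuum. -/
theorem closure_of_open_connected_finite_boundary_is_peano_subcontinuum
    {X : Type*} [MetricSpace X] [CompactSpace X] [ConnectedSpace X]
    [LocallyConnectedSpace X] [Nonempty X]
    (U : Set X) (hne : U.Nonempty) (ho : IsOpen U) (hc : IsConnected U)
    (hfr : (frontier U).Finite) :
    IsCompact (closure U) ∧ IsConnected (closure U) ∧
      LocallyConnectedSpace (closure U) :=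
  closure_of_open_connected_finite_boundary_is_peano_subcontinuum_general hc hfr.isDiscrete
end

section
/- Let X be a connected Hausdorff space and let x ∈ X be such that X \ {x} can be written as a disjoint union of n nonempty open sets for some n ∈ ℕ. Then the Menger order of x in X is at least n; equivalently, if x has a neighborhood basis consisting of sets whose boundaries have at most m points, then m ≥ n. -/
/-!
A set `A` whose frontier lies inside `V` but which sticks out of `V` must meet the frontier of `V`:
otherwise `A \ V` would be clopen. The pieces of `{x}ᶜ` all have frontier `{x}`, so if `V` is a
neighborhood of `x` omitting a point of each of finitely many pieces, then the frontier of `V`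
meets each of them, and the pieces are disjoint.
-/

open Set Topology

section Frontier

variable {X ι : Type*} [TopologicalSpace X]

theorem disjoint_frontier_iUnion_of_isOpen {A : ι → Set X} (hopen : ∀ i, IsOpen (A i))
    (hdisj : Pairwise fun i j => Disjoint (A i) (A j)) (i : ι) :
    Disjoint (frontier (A i)) (⋃ j, A j) := by
  refine disjoint_iUnion_right.2 fun j => ?_
  obtain rfl | hij := eq_or_ne i j
  · exact disjoint_frontier_iff_isOpen.2 (hopen i)
  · exact ((hdisj hij).closure_left (hopen j)).mono_left frontier_subset_closure

theorem compl_mem_nhds_iff_forall_not_specializes {x : X} {s : Set X} (hs : s.Finite) :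
    sᶜ ∈ 𝓝 x ↔ ∀ a ∈ s, ¬a ⤳ x := by
  rw [← mem_interior_iff_mem_nhds, interior_compl, mem_compl_iff, ← biUnion_of_singleton s,
    hs.closure_biUnion]
  simp [specializes_iff_mem_closure]

variable [PreconnectedSpace X]

theorem frontier_eq_singleton_of_iUnion_eq_compl {x : X} {A : ι → Set X}
    (hopen : ∀ i, IsOpen (A i)) (hdisj : Pairwise fun i j => Disjoint (A i) (A j))
    (hcover : ⋃ i, A i = {x}ᶜ) {i : ι} (hne : (A i).Nonempty) : frontier (A i) = {x} := by
  have hx : x ∉ A i := fun h => (hcover.subset (mem_iUnion_of_mem i h)) rfl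
  have hfrontier : (frontier (A i)).Nonempty :=
    nonempty_frontier_iff.2 ⟨hne, fun h => hx (h ▸ mem_univ x)⟩
  refine hfrontier.subset_singleton_iff.1 ?_
  rw [← disjoint_compl_right_iff_subset, ← hcover]
  exact disjoint_frontier_iUnion_of_isOpen hopen hdisj i

theorem inter_frontier_nonempty_of_frontier_subset_interior {s V : Set X}
    (hs : frontier s ⊆ interior V) (hV : V.Nonempty) (hsV : ¬s ⊆ V) :
    (s ∩ frontier V).Nonempty := by
  have hfrontier : (frontier (s ∩ Vᶜ)).Nonempty := by
    obtain ⟨v, hv⟩ := hV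
    refine nonempty_frontier_iff.2 ⟨inter_compl_nonempty_iff.2 hsV, fun h => ?_⟩
    exact (h.symm.subset (mem_univ v)).2 hv
  obtain ⟨y, hy⟩ := hfrontier
  rcases frontier_inter_subset s Vᶜ hy with ⟨hys, hyV⟩ | ⟨hys, hyV⟩
  · rw [closure_compl] at hyV
    exact absurd (hs hys) hyV
  · rw [frontier_compl] at hyV
    rw [closure_eq_self_union_frontier] at hys
    exact ⟨y, hys.resolve_right fun h => hyV.2 (hs h), hyV⟩

theorem encard_le_encard_frontier_of_pairwiseDisjoint {A : ι → Set X} {V : Set X} {t : Set ι}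
    (hdisj : t.PairwiseDisjoint A) (hfrontier : ∀ i ∈ t, frontier (A i) ⊆ interior V)
    (hV : V.Nonempty) (hAV : ∀ i ∈ t, ¬A i ⊆ V) : t.encard ≤ (frontier V).encard := by
  have hmeet (i : t) : (A i ∩ frontier V).Nonempty :=
    inter_frontier_nonempty_of_frontier_subset_interior (hfrontier i i.2) hV (hAV i i.2)
  choose b hbA hbV using hmeet
  have hb : Function.Injective fun i => (⟨b i, hbV i⟩ : frontier V) := fun i j hij => by
    have hbij : b i = b j := congrArg Subtype.val hij
    exact Subtype.ext <| hdisj.elim_set i.2 j.2 (b i) (hbA i) (hbij ▸ hbA j)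
  exact ENat.card_le_card_of_injective hb

end Frontier

theorem menger_order_ge_of_complement_split_general {X ι : Type*} [TopologicalSpace X]
    [PreconnectedSpace X] [R0Space X] {x : X} {A : ι → Set X} (hopen : ∀ i, IsOpen (A i))
    (hdisj : Pairwise fun i j => Disjoint (A i) (A j)) (hfrontier : ∀ i, frontier (A i) = {x})
    {m : ℕ∞} (hbasis : ∀ U ∈ 𝓝 x, ∃ V ∈ 𝓝 x, V ⊆ U ∧ (frontier V).encard ≤ m) :
    ENat.card ι ≤ m := by
  have hne (i : ι) : (A i).Nonempty :=
    (nonempty_frontier_iff.1 (hfrontier i ▸ singleton_nonempty x)).1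
  choose a ha using hne
  have hxA (i : ι) : x ∉ A i := by
    rw [← disjoint_singleton_left, ← hfrontier i]
    exact disjoint_frontier_iff_isOpen.2 (hopen i)
  have hax (i : ι) : ¬a i ⤳ x := fun h => hxA i (h.symm.mem_open (hopen i) (ha i))
  refine ENat.forall_natCast_le_iff_le.1 fun n hn => ?_
  obtain ⟨t, -, ht⟩ := exists_subset_encard_eq (encard_univ ι ▸ hn)
  have hU : (a '' t)ᶜ ∈ 𝓝 x :=
    (compl_mem_nhds_iff_forall_not_specializes ((finite_of_encard_eq_coe ht).image a)).2
      (forall_mem_image.2 fun i _ => hax i)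
  obtain ⟨V, hV, hVU, hVm⟩ := hbasis _ hU
  calc
    (n : ℕ∞) = t.encard := ht.symm
    _ ≤ (frontier V).encard :=
      encard_le_encard_frontier_of_pairwiseDisjoint (hdisj.set_pairwise t)
        (fun i _ => by simpa only [hfrontier i, singleton_subset_iff, mem_interior_iff_mem_nhds])
        ⟨x, mem_of_mem_nhds hV⟩ fun i hi h => hVU (h (ha i)) ⟨i, hi, rfl⟩
    _ ≤ m := hVm

/-- If `X` is a connected Hausdorff space and `X \ {x}` is a disjoint union of `n`
nonempty open sets, then the Menger order of `x` is at least `n`: whenever `x` has a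
neighborhood basis consisting of sets whose boundaries have at most `m` points, then
`m ≥ n`. -/
theorem menger_order_ge_of_complement_split
    {X : Type*} [TopologicalSpace X] [ConnectedSpace X] [T2Space X]
    (x : X) (n : ℕ) (A : Fin n → Set X)
    (hopen : ∀ i, IsOpen (A i))
    (hne : ∀ i, (A i).Nonempty)
    (hdisj : Pairwise fun i j => Disjoint (A i) (A j))
    (hcover : (⋃ i, A i) = ({x}ᶜ : Set X))
    (m : ℕ)
    (hbasis : ∀ U ∈ nhds x, ∃ V ∈ nhds x, V ⊆ U ∧ (frontier V).encard ≤ m) :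
    n ≤ m := by
  simpa using menger_order_ge_of_complement_split_general hopen hdisj
    (fun i => frontier_eq_singleton_of_iUnion_eq_compl hopen hdisj hcover (hne i)) hbasis
end

section
/- Let X be a Peano continuum with uncountably many cut points. Then there exist pairwise disjoint nondegenerate Peano subcontinua L, R, and X_s for every finite 0-1 sequence s ∈ 2^{<ω}, points l, r, l(s), r(s) ∈ X, and a homeomorphism h : 2^ω → C onto a subset C ⊆ X (where 2^ω is the Cantor space of infinite 0-1 sequences) such that: L ∩ C = {l}; R ∩ C = {r}; X_s ∩ C = {l(s), r(s)} for every s; h(0,0,0,...) = l and h(1,1,1,...) = r; h(s⌢1⌢(0,0,0,...)) = r(s) and h(s⌢0⌢(1,1,1,...)) = l(s) for every s, where ⌢ denotes concatenation; and X = L ∪ R ∪ C ∪ ⋃_{s∈2^{<ω}} X_s. -/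
/-- `x` is a cut point of the connected space `X` if `X \ {x}` is not connected. -/
def IsCutPoint {X : Type*} [TopologicalSpace X] (x : X) : Prop :=
  ¬ IsPreconnected ({x}ᶜ : Set X)

/-- Concatenation of a finite 0-1 sequence with an infinite 0-1 sequence. -/
def catSeq (s : List Bool) (t : ℕ → Bool) : ℕ → Bool :=
  fun i => if h : i < s.length then s.get ⟨i, h⟩ else t (i - s.length)

/-!
Cut points split the space, and by separability uncountably many of these splittings are nested,
so they contain a chain `S q` indexed by the rationals. As in Urysohn's lemma, the chain yields a
continuous height function `F`. Every connected set that joins two different levels of `F` passes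
through the cut point of some `S q` in between, and together with local connectedness this makes
each fibre without interior a single point. Only countably many fibres have interior, so a Cantor
set `K` of reals, ordered like the lexicographic order on `2^ω`, avoids all of them. The fibres
over `K` form `C`, and the preimages of the gaps of `K` are the pieces: collapsing everything
beyond a one-point fibre retracts the space onto the preimage of an interval, so these preimages
inherit compactness, connectedness and local connectedness.
-/

open Set Topology TopologicalSpace

section Retract

variable {X : Type*} [TopologicalSpace X]

/-- The map fixing `A` and collapsing the rest of the space to the point `x`. -/
noncomputable def collapseCompl (A : Set X) (x : X) : X → X :=
  open Classical in A.piecewise id fun _ => x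

theorem continuous_collapseCompl {A : Set X} {x : X} (hA : frontier A ⊆ {x}) :
    Continuous (collapseCompl A x) := by
  classical
  exact Continuous.piecewise (fun _ hy => hA hy) continuous_id continuous_const

/-- `M` is a retract of the ambient space, in the sense of topology. -/
def IsRetract (M : Set X) : Prop :=
  ∃ f : X → X, Continuous f ∧ (∀ x, f x ∈ M) ∧ ∀ x ∈ M, f x = x

theorem isRetract_univ : IsRetract (univ : Set X) :=
  ⟨id, continuous_id, mem_univ, fun _ _ => rfl⟩

namespace IsRetract

variable {M : Set X}

theorem exists_range_eq (hM : IsRetract M) : ∃ f : X → X, Continuous f ∧ range f = M := by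
  obtain ⟨f, hf, hmem, hid⟩ := hM
  exact ⟨f, hf, Subset.antisymm (range_subset_iff.2 hmem) fun x hx => ⟨x, hid x hx⟩⟩

theorem isCompact [CompactSpace X] (hM : IsRetract M) : IsCompact M := by
  obtain ⟨f, hf, rfl⟩ := hM.exists_range_eq
  exact isCompact_range hf

theorem isConnected [ConnectedSpace X] (hM : IsRetract M) : IsConnected M := by
  obtain ⟨f, hf, rfl⟩ := hM.exists_range_eq
  exact isConnected_range hf

theorem locallyConnectedSpace [LocallyConnectedSpace X] (hM : IsRetract M) :
    LocallyConnectedSpace M := by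
  obtain ⟨f, hf, hmem, hid⟩ := hM
  have hquot : IsQuotientMap fun x => (⟨f x, hmem x⟩ : M) :=
    .of_inverse continuous_subtype_val (hf.subtype_mk hmem) fun x => Subtype.ext (hid x x.2)
  exact hquot.isCoinducing.locallyConnectedSpace

theorem inter (hM : IsRetract M) {A : Set X} {x : X} (hA : frontier A ⊆ {x}) (hx : x ∈ M ∩ A) :
    IsRetract (M ∩ A) := by
  classical
  obtain ⟨f, hf, hmem, hid⟩ := hM
  refine ⟨collapseCompl A x ∘ f, (continuous_collapseCompl hA).comp hf, fun y => ?_,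
    fun y hy => ?_⟩
  · by_cases hy : f y ∈ A
    · simpa [collapseCompl, hy] using hmem y
    · simpa [collapseCompl, hy] using hx
  · simp [collapseCompl, hid y hy.1, hy.2]

end IsRetract

end Retract

/-- A decomposition of the complement of a point into two disjoint open sets. -/
structure PointSeparation (X : Type*) [TopologicalSpace X] where
  point : X
  left : Set X
  right : Set X
  isOpen_left : IsOpen left
  isOpen_right : IsOpen right
  disjoint : Disjoint left right
  union_eq : left ∪ right = {point}ᶜ

theorem IsCutPoint.exists_pointSeparation {X : Type*} [TopologicalSpace X] [T1Space X] {x : X}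
    (hx : IsCutPoint x) :
    ∃ S : PointSeparation X, S.point = x ∧ S.left.Nonempty ∧ S.right.Nonempty := by
  have hopen : IsOpen ({x}ᶜ : Set X) := isOpen_compl_singleton
  unfold IsCutPoint IsPreconnected at hx
  push Not at hx
  obtain ⟨u, v, hu, hv, huv, hune, hvne, hempty⟩ := hx
  refine ⟨⟨x, {x}ᶜ ∩ u, {x}ᶜ ∩ v, hopen.inter hu, hopen.inter hv, ?_, ?_⟩, rfl, hune, hvne⟩
  · rw [disjoint_iff_inter_eq_empty, ← inter_inter_distrib_left, hempty]
  · rw [← inter_union_distrib_left, inter_eq_left.2 huv]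

namespace PointSeparation

variable {X : Type*} [TopologicalSpace X]

/-- The same decomposition with its sides exchanged. -/
def swap (S : PointSeparation X) : PointSeparation X :=
  ⟨S.point, S.right, S.left, S.isOpen_right, S.isOpen_left, S.disjoint.symm,
    by rw [union_comm, S.union_eq]⟩

theorem point_notMem_left (S : PointSeparation X) : S.point ∉ S.left := fun h =>
  S.union_eq.le (Or.inl h) rfl

theorem point_notMem_right (S : PointSeparation X) : S.point ∉ S.right :=
  S.swap.point_notMem_left

theorem mem_left_or_mem_right (S : PointSeparation X) {x : X} (hx : x ≠ S.point) :
    x ∈ S.left ∨ x ∈ S.right :=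
  S.union_eq.ge hx

theorem point_mem_of_isPreconnected (S : PointSeparation X) {W : Set X} (hW : IsPreconnected W)
    (hleft : (W ∩ S.left).Nonempty) (hright : (W ∩ S.right).Nonempty) : S.point ∈ W := by
  by_contra hS
  have hWS : W ⊆ S.left ∪ S.right := S.union_eq ▸ subset_compl_singleton_iff.2 hS
  obtain ⟨x, -, hx⟩ := hW _ _ S.isOpen_left S.isOpen_right hWS hleft hright
  exact S.disjoint.notMem_of_mem_left hx.1 hx.2

theorem frontier_compl_right_subset (S : PointSeparation X) : frontier S.rightᶜ ⊆ {S.point} := by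
  intro x hx
  by_contra hne
  rw [frontier_compl, S.isOpen_right.frontier_eq] at hx
  have hxl : x ∈ S.left := (S.mem_left_or_mem_right hne).resolve_right hx.2
  exact (S.disjoint.symm.closure_left S.isOpen_left).notMem_of_mem_left hx.1 hxl

theorem isConnected_compl_right [ConnectedSpace X] (S : PointSeparation X) :
    IsConnected S.rightᶜ := by
  rw [← univ_inter S.rightᶜ]
  exact (isRetract_univ.inter S.frontier_compl_right_subset
    ⟨mem_univ _, S.point_notMem_right⟩).isConnected

/-- `S < T` says that the closed left side of `S` is contained in the open left side of `T`. -/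
instance : PartialOrder (PointSeparation X) :=
  have : IsStrictOrder (PointSeparation X) fun S T => S.rightᶜ ⊆ T.left :=
    { irrefl := fun S h => S.point_notMem_left (h S.point_notMem_right)
      trans := fun _ T _ hST hTR => hST.trans (T.disjoint.subset_compl_right.trans hTR) }
  partialOrderOfSO fun S T => S.rightᶜ ⊆ T.left

variable {S T : PointSeparation X}

theorem swap_lt_swap (h : S < T) : T.swap < S.swap := compl_subset_comm.1 h

theorem left_subset_left (h : S < T) : S.left ⊆ T.left := S.disjoint.subset_compl_right.trans h

theorem right_subset_right (h : S < T) : T.right ⊆ S.right := left_subset_left (swap_lt_swap h)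

theorem point_mem_left (h : S < T) : S.point ∈ T.left := h S.point_notMem_right

theorem point_mem_right (h : S < T) : T.point ∈ S.right := point_mem_left (swap_lt_swap h)

theorem left_union_right_eq_univ (h : S < T) : T.left ∪ S.right = univ :=
  eq_univ_of_forall fun _ => or_iff_not_imp_right.2 fun hx => h hx

section ConnectedSpace

variable [ConnectedSpace X]

theorem right_inter_left_nonempty (h : S < T) : (S.right ∩ T.left).Nonempty := by
  rw [inter_comm]
  exact nonempty_inter T.isOpen_left S.isOpen_right (left_union_right_eq_univ h)
    ⟨_, point_mem_left h⟩ ⟨_, point_mem_right h⟩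

theorem lt_of_point_mem_right (hpoint : T.point ∈ S.right) (hleft : (S.left ∩ T.left).Nonempty) :
    S < T := by
  obtain ⟨p, hpS, hpT⟩ := hleft
  intro x (hx : x ∈ S.rightᶜ)
  by_contra hxT
  have hne : x ≠ T.point := fun h => hx (h ▸ hpoint)
  exact T.point_mem_of_isPreconnected S.isConnected_compl_right.isPreconnected
    ⟨p, S.disjoint.notMem_of_mem_left hpS, hpT⟩
    ⟨x, hx, (T.mem_left_or_mem_right hne).resolve_left hxT⟩ hpoint

theorem lt_or_gt_of_point_ne (hpoint : S.point ≠ T.point) (hleft : (S.left ∩ T.left).Nonempty)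
    (hright : (S.right ∩ T.right).Nonempty) : S < T ∨ T < S := by
  rcases S.mem_left_or_mem_right hpoint.symm with h | h
  · exact Or.inr (swap_lt_swap (lt_of_point_mem_right (S := S.swap) (T := T.swap) h hright))
  · exact Or.inl (lt_of_point_mem_right h hleft)

theorem exists_strictMono_real [SeparableSpace X] :
    ∃ φ : PointSeparation X → ℝ, StrictMono φ := by
  classical
  let digits (S : PointSeparation X) (n : ℕ) : Bool := denseSeq X n ∈ S.left
  refine ⟨fun S => Cardinal.cantorFunction (1 / 3) (digits S), fun S T h => ?_⟩
  have hle : Cardinal.cantorFunction (1 / 3) (digits S) ≤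
      Cardinal.cantorFunction (1 / 3) (digits T) :=
    Cardinal.cantorFunction_le (by norm_num) (by norm_num) fun n => by
      have hn : denseSeq X n ∈ S.left → denseSeq X n ∈ T.left := fun hn => left_subset_left h hn
      simpa [digits] using hn
  refine hle.lt_of_ne fun heq => ?_
  obtain ⟨n, hnS, hnT⟩ := (denseRange_denseSeq X).exists_mem_open
    (S.isOpen_right.inter T.isOpen_left) (right_inter_left_nonempty h)
  have hn := congrFun (Cardinal.cantorFunction_injective (by norm_num) (by norm_num) heq) n
  have : denseSeq X n ∈ S.left := by simpa [digits, hnT] using hn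
  exact S.disjoint.notMem_of_mem_left this hnS

theorem exists_uncountable_isChain [T1Space X] [SeparableSpace X]
    (hcut : ¬ {x : X | IsCutPoint x}.Countable) :
    ∃ 𝒜 : Set (PointSeparation X), ¬ 𝒜.Countable ∧ IsChain (· ≤ ·) 𝒜 := by
  have hsurj : SurjOn point {S : PointSeparation X | S.left.Nonempty ∧ S.right.Nonempty}
      {x : X | IsCutPoint x} := fun x hx => by
    obtain ⟨S, hpoint, hS⟩ := IsCutPoint.exists_pointSeparation hx
    exact ⟨S, hS, hpoint⟩
  obtain ⟨𝒮, h𝒮, hbij⟩ := hsurj.exists_bijOn_subset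
  let B (m n : ℕ) : Set (PointSeparation X) :=
    {S ∈ 𝒮 | denseSeq X m ∈ S.left ∧ denseSeq X n ∈ S.right}
  have hcover : 𝒮 ⊆ ⋃ (m) (n), B m n := fun S hS => by
    obtain ⟨m, hm⟩ := (denseRange_denseSeq X).exists_mem_open S.isOpen_left (h𝒮 hS).1
    obtain ⟨n, hn⟩ := (denseRange_denseSeq X).exists_mem_open S.isOpen_right (h𝒮 hS).2
    exact mem_iUnion₂.2 ⟨m, n, hS, hm, hn⟩
  obtain ⟨m, n, hB⟩ : ∃ m n, ¬ (B m n).Countable := by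
    by_contra! h
    have h𝒮count : 𝒮.Countable :=
      (countable_iUnion fun m => countable_iUnion (h m)).mono hcover
    exact hcut (hbij.image_eq ▸ h𝒮count.image point)
  refine ⟨B m n, hB, fun S hS T hT hne => ?_⟩
  have hpoint : S.point ≠ T.point := fun h => hne (hbij.injOn hS.1 hT.1 h)
  exact (lt_or_gt_of_point_ne hpoint ⟨_, hS.2.1, hT.2.1⟩ ⟨_, hS.2.2, hT.2.2⟩).imp
    le_of_lt le_of_lt

end ConnectedSpace

end PointSeparation

section Pinched

variable {X α : Type*} [TopologicalSpace X] [LinearOrder α]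

/-- `F` is pinched if, whenever `s < t`, a single point lies on every connected set joining
`{F ≤ s}` to `{F ≥ t}`. -/
def IsPinched (F : X → α) : Prop :=
  ∀ ⦃s t : α⦄, s < t → ∃ p : X, ∀ W : Set X, IsPreconnected W →
    (W ∩ F ⁻¹' Iic s).Nonempty → (W ∩ F ⁻¹' Ici t).Nonempty → p ∈ W

namespace IsPinched

variable {F : X → α} {t : α}

theorem dual (hF : IsPinched F) : IsPinched (OrderDual.toDual ∘ F) := fun _ _ hst =>
  let ⟨p, hp⟩ := hF hst
  ⟨p, fun W hW hs ht => hp W hW ht hs⟩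

section LocallyConnectedSpace

variable [T2Space X] [LocallyConnectedSpace X]

/-- Disjoint connected neighbourhoods of `x` and `y` would both reach down to a level `s < t`, and
so would both contain the point at which the space is pinched between `s` and `t`. -/
theorem eq_of_mem_closure_Iio (hF : IsPinched F) {x y : X}
    (hx : x ∈ closure (F ⁻¹' Iio t)) (hy : y ∈ closure (F ⁻¹' Iio t))
    (hxt : t ≤ F x) (hyt : t ≤ F y) : x = y := by
  by_contra hne
  obtain ⟨U, V, hU, hV, hxU, hyV, hUV⟩ := t2_separation hne
  have hxU' := mem_connectedComponentIn hxU
  have hyV' := mem_connectedComponentIn hyV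
  obtain ⟨a, haU, hat⟩ := mem_closure_iff.1 hx _ hU.connectedComponentIn hxU'
  obtain ⟨b, hbV, hbt⟩ := mem_closure_iff.1 hy _ hV.connectedComponentIn hyV'
  obtain ⟨p, hp⟩ := hF (max_lt hat hbt)
  have hpU := hp _ isPreconnected_connectedComponentIn ⟨a, haU, le_max_left _ _⟩ ⟨x, hxU', hxt⟩
  have hpV := hp _ isPreconnected_connectedComponentIn ⟨b, hbV, le_max_right _ _⟩ ⟨y, hyV', hyt⟩
  exact hUV.notMem_of_mem_left (connectedComponentIn_subset _ _ hpU)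
    (connectedComponentIn_subset _ _ hpV)

theorem eq_of_mem_closure_Ioi (hF : IsPinched F) {x y : X}
    (hx : x ∈ closure (F ⁻¹' Ioi t)) (hy : y ∈ closure (F ⁻¹' Ioi t))
    (hxt : F x ≤ t) (hyt : F y ≤ t) : x = y :=
  eq_of_mem_closure_Iio (t := OrderDual.toDual t) hF.dual hx hy hxt hyt

/-- The closures of `{F < t}` and `{F > t}` cover the space, so by connectedness they share a
point of the fibre, while pinching leaves room for at most one such point in each. -/
theorem exists_fiber_eq_singleton [ConnectedSpace X] [TopologicalSpace α] [OrderClosedTopology α]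
    (hF : IsPinched F) (hcont : Continuous F) (hint : interior (F ⁻¹' {t}) = ∅)
    (hlt : ∃ x, F x < t) (hgt : ∃ x, t < F x) : ∃ e, F ⁻¹' {t} = {e} := by
  have hcover : univ ⊆ closure (F ⁻¹' Iio t) ∪ closure (F ⁻¹' Ioi t) := by
    rw [← closure_union, ← preimage_union, Iio_union_Ioi, preimage_compl]
    exact (interior_eq_empty_iff_dense_compl.1 hint).closure_eq.ge
  have hle : closure (F ⁻¹' Iio t) ⊆ F ⁻¹' Iic t :=
    closure_minimal (preimage_mono Iio_subset_Iic_self) (isClosed_Iic.preimage hcont)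
  have hge : closure (F ⁻¹' Ioi t) ⊆ F ⁻¹' Ici t :=
    closure_minimal (preimage_mono Ioi_subset_Ici_self) (isClosed_Ici.preimage hcont)
  have hlt' : (closure (F ⁻¹' Iio t)).Nonempty := Nonempty.closure hlt
  have hgt' : (closure (F ⁻¹' Ioi t)).Nonempty := Nonempty.closure hgt
  obtain ⟨e, -, helt, hegt⟩ := isPreconnected_closed_iff.1 isPreconnected_univ _ _
    isClosed_closure isClosed_closure hcover
    (univ_inter _ ▸ hlt') (univ_inter _ ▸ hgt')
  refine ⟨e, Subset.antisymm (fun x hx => ?_) ?_⟩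
  · rcases hcover (mem_univ x) with h | h
    · exact hF.eq_of_mem_closure_Iio h helt (mem_singleton_iff.1 hx).ge (hge hegt)
    · exact hF.eq_of_mem_closure_Ioi h hegt (mem_singleton_iff.1 hx).le (hle helt)
  · exact singleton_subset_iff.2 (le_antisymm (hle helt) (hge hegt))

end LocallyConnectedSpace

end IsPinched

end Pinched

namespace PointSeparation

variable {X : Type*} [TopologicalSpace X] {S : ℚ → PointSeparation X} {x : X} {c : EReal}

/-- The Urysohn-type function of a family of separations indexed by the rationals. It is valued
in `EReal` because a point may lie to the right of none or of all of them. -/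
noncomputable def height (S : ℚ → PointSeparation X) (x : X) : EReal :=
  ⨆ (q : ℚ) (_ : x ∈ (S q).right), ((q : ℝ) : EReal)

theorem le_height {q : ℚ} (hx : x ∈ (S q).right) : ((q : ℝ) : EReal) ≤ height S x :=
  le_iSup₂ (f := fun (q : ℚ) (_ : x ∈ (S q).right) => ((q : ℝ) : EReal)) q hx

theorem lt_height_iff : c < height S x ↔ ∃ q : ℚ, c < (q : ℝ) ∧ x ∈ (S q).right := by
  simp only [height, lt_iSup_iff, exists_prop, and_comm]

theorem height_lt_iff (hS : StrictMono S) :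
    height S x < c ↔ ∃ q : ℚ, (q : ℝ) < c ∧ x ∈ (S q).left := by
  constructor
  · intro h
    obtain ⟨q, hxq, hqc⟩ := EReal.exists_rat_btwn_of_lt h
    obtain ⟨r, hqr, hrc⟩ := EReal.exists_rat_btwn_of_lt hqc
    have hx : x ∉ (S q).right := fun hx => (le_height hx).not_gt hxq
    exact ⟨r, hrc, hS (by exact_mod_cast hqr) hx⟩
  · rintro ⟨q, hqc, hx⟩
    refine (iSup₂_le fun r hr => ?_).trans_lt hqc
    by_contra! hqr
    have hqr' : q < r := by exact_mod_cast hqr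
    exact (S q).disjoint.notMem_of_mem_left hx (right_subset_right (hS hqr') hr)

theorem continuous_height (hS : StrictMono S) : Continuous (height S) := by
  refine OrderTopology.continuous_iff.2 fun c => ⟨?_, ?_⟩
  · have : height S ⁻¹' Ioi c = ⋃ (q : ℚ) (_ : c < (q : ℝ)), (S q).right := by
      ext x
      simp only [mem_preimage, mem_Ioi, lt_height_iff, mem_iUnion, exists_prop]
    exact this ▸ isOpen_iUnion fun q => isOpen_iUnion fun _ => (S q).isOpen_right
  · have : height S ⁻¹' Iio c = ⋃ (q : ℚ) (_ : (q : ℝ) < c), (S q).left := by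
      ext x
      simp only [mem_preimage, mem_Iio, height_lt_iff hS, mem_iUnion, exists_prop]
    exact this ▸ isOpen_iUnion fun q => isOpen_iUnion fun _ => (S q).isOpen_left

theorem isPinched_height (hS : StrictMono S) : IsPinched (height S) := by
  intro s t hst
  obtain ⟨q, hsq, hqt⟩ := EReal.exists_rat_btwn_of_lt hst
  refine ⟨(S q).point, fun W hW ⟨x, hxW, hx⟩ ⟨y, hyW, hy⟩ => ?_⟩
  obtain ⟨r, hrq, hxr⟩ := (height_lt_iff hS).1 (hx.trans_lt hsq)
  obtain ⟨r', hqr', hyr'⟩ := lt_height_iff.1 (hqt.trans_le hy)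
  refine (S q).point_mem_of_isPreconnected hW ⟨x, hxW, ?_⟩ ⟨y, hyW, ?_⟩
  · exact left_subset_left (hS (by exact_mod_cast hrq)) hxr
  · exact right_subset_right (hS (by exact_mod_cast hqr')) hyr'

theorem exists_height_lt (hS : StrictMono S) (t : ℝ) : ∃ x, height S x < t := by
  obtain ⟨q, hq⟩ := exists_rat_lt t
  exact ⟨(S (q - 1)).point,
    (height_lt_iff hS).2 ⟨q, by exact_mod_cast hq, point_mem_left (hS (sub_one_lt q))⟩⟩

theorem exists_lt_height (hS : StrictMono S) (t : ℝ) : ∃ x, t < height S x := by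
  obtain ⟨q, hq⟩ := exists_rat_gt t
  exact ⟨(S (q + 1)).point,
    lt_height_iff.2 ⟨q, by exact_mod_cast hq, point_mem_right (hS (lt_add_one q))⟩⟩

theorem exists_countable_fiber_height_eq_singleton [T2Space X] [SeparableSpace X]
    [ConnectedSpace X] [LocallyConnectedSpace X] (hS : StrictMono S) :
    ∃ D : Set ℝ, D.Countable ∧ ∀ t ∉ D, ∃ e, height S ⁻¹' {(t : EReal)} = {e} := by
  let D : Set ℝ := {t | (interior (height S ⁻¹' {(t : EReal)})).Nonempty}
  have hD : D.PairwiseDisjoint fun t : ℝ => height S ⁻¹' {(t : EReal)} := fun t _ u _ hne =>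
    (disjoint_singleton.2 fun h => hne (EReal.coe_injective h)).preimage _
  exact ⟨D, hD.countable_of_nonempty_interior fun t ht => ht, fun t ht =>
    (isPinched_height hS).exists_fiber_eq_singleton (continuous_height hS)
      (not_nonempty_iff_eq_empty.1 ht) (exists_height_lt hS t) (exists_lt_height hS t)⟩

end PointSeparation

section Order

variable {α : Type*} [LinearOrder α]

theorem countable_setOf_exists_countable_inter_Ioo [TopologicalSpace α] [OrderTopology α]
    [SecondCountableTopology α] (A : Set α) :
    {x ∈ A | ∃ y, x < y ∧ (A ∩ Ioo x y).Countable}.Countable := by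
  set B := {x ∈ A | ∃ y, x < y ∧ (A ∩ Ioo x y).Countable}
  choose! y hlt hcount using fun x (hx : x ∈ B) => hx.2
  obtain ⟨T, hTB, hT, hTU⟩ := isOpen_biUnion_countable B (fun x => Ioo x (y x))
    fun x _ => isOpen_Ioo
  have hin : (B ∩ ⋃ x ∈ B, Ioo x (y x)).Countable := by
    rw [← hTU, inter_iUnion₂]
    exact hT.biUnion fun x hx =>
      (hcount x (hTB hx)).mono (inter_subset_inter_left _ (sep_subset _ _))
  have hout : (B \ ⋃ x ∈ B, Ioo x (y x)).Countable := by
    have hgap : ∀ x ∈ B, ∀ z ∈ B \ ⋃ x ∈ B, Ioo x (y x), x < z → y x ≤ z := by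
      intro x hx z hz hxz
      by_contra! hzy
      exact hz.2 (mem_biUnion hx ⟨hxz, hzy⟩)
    refine PairwiseDisjoint.countable_of_Ioo (y := y) (fun x hx z hz hne => ?_)
      fun x hx => hlt x hx.1
    refine disjoint_left.2 fun w hwx hwz => ?_
    rcases hne.lt_or_gt with h | h
    · exact ((hwx.2.trans_le (hgap x hx.1 z hz h)).trans hwz.1).false
    · exact ((hwz.2.trans_le (hgap z hz.1 x hx h)).trans hwx.1).false
  exact inter_union_sdiff B _ ▸ hin.union hout

theorem exists_strictMono_rat_of_not_countable [TopologicalSpace α] [OrderTopology α]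
    [SecondCountableTopology α] {A : Set α} (hA : ¬ A.Countable) :
    ∃ f : ℚ → α, StrictMono f ∧ ∀ q, f q ∈ A := by
  set B := {x ∈ A | ∃ y, x < y ∧ (A ∩ Ioo x y).Countable}
  have hB : B.Countable := countable_setOf_exists_countable_inter_Ioo A
  have hAB : ¬ (A \ B).Countable := fun h => hA (h.of_sdiff hB)
  have : Nontrivial ↥(A \ B) := (not_subsingleton_iff.1 fun h => hAB h.countable).coe_sort
  have : DenselyOrdered ↥(A \ B) := by
    refine ⟨fun x y hxy => ?_⟩
    have hIoo : ¬ (A ∩ Ioo (x : α) y).Countable := fun h => x.2.2 ⟨x.2.1, y, hxy, h⟩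
    obtain ⟨z, hz, hzB⟩ := not_subset.1 fun h => hIoo (hB.mono h)
    exact ⟨⟨z, hz.1, hzB⟩, hz.2.1, hz.2.2⟩
  obtain ⟨f⟩ := Order.embedding_from_countable_to_dense ℚ ↥(A \ B)
  exact ⟨fun q => f q, fun p q h => f.strictMono h, fun q => (f q).2.1⟩

theorem exists_strictMono_rat_of_isChain {α β : Type*} [PartialOrder α] [LinearOrder β]
    [TopologicalSpace β] [OrderTopology β] [SecondCountableTopology β] {A : Set α}
    (hchain : IsChain (· ≤ ·) A) (hA : ¬ A.Countable) {φ : α → β} (hφ : StrictMono φ) :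
    ∃ f : ℚ → α, StrictMono f := by
  have hlt : ∀ x ∈ A, ∀ y ∈ A, φ x < φ y → x < y := by
    intro x hx y hy h
    rcases hchain.total hx hy with hxy | hyx
    · exact hxy.lt_of_ne fun heq => h.ne (congrArg φ heq)
    · exact absurd (hφ.monotone hyx) h.not_ge
  have hinj : InjOn φ A := fun x hx y hy h => by
    rcases hchain.total hx hy with hxy | hyx
    · exact hxy.eq_of_not_lt fun hlt => (hφ hlt).ne h
    · exact (hyx.eq_of_not_lt fun hlt => (hφ hlt).ne' h).symm
  obtain ⟨g, hg, hgA⟩ := exists_strictMono_rat_of_not_countable fun h =>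
    hA (countable_of_injective_of_countable_image hinj h)
  choose f hfA hf using hgA
  exact ⟨f, fun p q h => hlt _ (hfA p) _ (hfA q) (by rw [hf, hf]; exact hg h)⟩

end Order

section CantorSet
open Cardinal

theorem continuous_cantorFunction {c : ℝ} (h0 : 0 ≤ c) (h1 : c < 1) :
    Continuous (cantorFunction c) := by
  refine continuous_tsum (fun n => ?_) (summable_geometric_of_lt_one h0 h1) fun n f => ?_
  · exact (continuous_of_discreteTopology (f := fun b => cond b (c ^ n) 0)).comp
      (continuous_apply n)
  · cases h : f n <;> simp [cantorFunctionAux, h, abs_of_nonneg h0, h0]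

/-- The sequence `f 0, e 0, f 1, e 1, …`. -/
def interleave (f e : ℕ → Bool) (n : ℕ) : Bool :=
  if Even n then f (n / 2) else e (n / 2)

theorem continuous_interleave (e : ℕ → Bool) : Continuous fun f => interleave f e := by
  refine continuous_pi fun n => ?_
  unfold interleave
  split_ifs <;> fun_prop

theorem right_eq_of_interleave_eq {f f' e e' : ℕ → Bool} (h : interleave f e = interleave f' e') :
    e = e' := by
  funext n
  have hn := congrFun h (2 * n + 1)
  have : (2 * n + 1) / 2 = n := by lia
  simpa [interleave, this] using hn

theorem strictMono_interleave (e : ℕ → Bool) :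
    StrictMono fun f : Lex (ℕ → Bool) => toLex (interleave (ofLex f) e) := by
  rintro f f' ⟨n, hlt, hn⟩
  refine ⟨2 * n, fun k hk => ?_, by simpa [interleave] using hn⟩
  have : ofLex f (k / 2) = ofLex f' (k / 2) := hlt (k / 2) (by lia)
  simp [interleave, this]

theorem strictMono_cantorFunction {c : ℝ} (h0 : 0 < c) (h1 : c < 1 / 2) :
    StrictMono fun f : Lex (ℕ → Bool) => cantorFunction c (ofLex f) := by
  rintro f f' ⟨n, hlt, hn⟩
  obtain ⟨hf, hf'⟩ := Bool.lt_iff.1 hn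
  exact increasing_cantorFunction h0 h1 (fun k hk => hlt k hk) hf hf'

theorem exists_strictMono_continuous_forall_notMem {D : Set ℝ} (hD : D.Countable) :
    ∃ g : Lex (ℕ → Bool) → ℝ,
      StrictMono g ∧ Continuous (fun f => g (toLex f)) ∧ ∀ f, g f ∉ D := by
  let g (e : ℕ → Bool) (f : Lex (ℕ → Bool)) : ℝ := cantorFunction (1 / 3) (interleave (ofLex f) e)
  -- Different `e` give disjoint ranges, so only countably many of them can meet `D`.
  obtain ⟨e, he⟩ : ∃ e, ∀ f, g e f ∉ D := by
    by_contra! h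
    choose f hf using h
    have hinj : Function.Injective fun e => (⟨g e (f e), hf e⟩ : D) := fun e e' h =>
      right_eq_of_interleave_eq (cantorFunction_injective (by norm_num) (by norm_num)
        (congrArg Subtype.val h))
    have := hD.to_subtype
    have : Uncountable (ℕ → Bool) := aleph0_lt_mk_iff.1 (by simpa using cantor ℵ₀)
    exact not_countable hinj.countable
  refine ⟨g e, ?_, ?_, he⟩
  · exact (strictMono_cantorFunction (by norm_num) (by norm_num)).comp (strictMono_interleave e)
  · exact (continuous_cantorFunction (by norm_num) (by norm_num)).comp (continuous_interleave e)

end CantorSet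

section GapEnd

/-- The endpoints `s⌢0⌢(1,1,1,…)` (for `i = false`) and `s⌢1⌢(0,0,0,…)` (for `i = true`) of the
gap of the Cantor set indexed by `s`. -/
def gapEnd (s : List Bool) (i : Bool) : Lex (ℕ → Bool) :=
  toLex (catSeq (s ++ [i]) fun _ => !i)

variable {s : List Bool} {i : Bool} {n : ℕ}

theorem gapEnd_apply_of_lt (hn : n < s.length) : ofLex (gapEnd s i) n = s[n] := by
  simp [gapEnd, catSeq, hn.trans (Nat.lt_succ_self _), List.getElem_append_left hn]

theorem gapEnd_apply_length : ofLex (gapEnd s i) s.length = i := by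
  simp [gapEnd, catSeq]

theorem gapEnd_apply_of_gt (hn : s.length < n) : ofLex (gapEnd s i) n = !i := by
  simp [gapEnd, catSeq, Nat.not_lt.2 (Nat.succ_le_of_lt hn)]

theorem gapEnd_injective2 : Function.Injective2 gapEnd := by
  have hlen : ∀ {s t : List Bool} {i j : Bool}, gapEnd s i = gapEnd t j → t.length ≤ s.length := by
    intro s t i j h
    by_contra! hst
    have hj : j = !i := by
      rw [← gapEnd_apply_length (s := t) (i := j), ← h, gapEnd_apply_of_gt hst]
    have hj' : (!j) = !i := by
      rw [← gapEnd_apply_of_gt (s := t) (i := j) (Nat.lt_succ_self _), ← h,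
        gapEnd_apply_of_gt (hst.trans (Nat.lt_succ_self _))]
    grind
  intro s t i j h
  have hst : s.length = t.length := (hlen h.symm).antisymm (hlen h)
  refine ⟨List.ext_getElem hst fun n hns hnt => ?_, ?_⟩
  · rw [← gapEnd_apply_of_lt (i := i) hns, ← gapEnd_apply_of_lt (i := j) hnt, h]
  · rw [← gapEnd_apply_length (s := s) (i := i), ← gapEnd_apply_length (s := t) (i := j), h, hst]

theorem le_gapEnd_false {f : Lex (ℕ → Bool)} (hs : ∀ n, ∀ h : n < s.length, ofLex f n = s[n])
    (hf : ofLex f s.length = false) : f ≤ gapEnd s false := by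
  refine Pi.toLex_monotone (a := ofLex f) (b := ofLex (gapEnd s false)) fun n => ?_
  rcases lt_trichotomy n s.length with hn | rfl | hn
  · exact ((hs n hn).trans (gapEnd_apply_of_lt hn).symm).le
  · exact (hf.trans gapEnd_apply_length.symm).le
  · exact (Bool.le_true _).trans_eq (gapEnd_apply_of_gt (i := false) hn).symm

theorem gapEnd_true_le {f : Lex (ℕ → Bool)} (hs : ∀ n, ∀ h : n < s.length, ofLex f n = s[n])
    (hf : ofLex f s.length = true) : gapEnd s true ≤ f := by
  refine Pi.toLex_monotone (a := ofLex (gapEnd s true)) (b := ofLex f) fun n => ?_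
  rcases lt_trichotomy n s.length with hn | rfl | hn
  · exact ((gapEnd_apply_of_lt hn).trans (hs n hn).symm).le
  · exact (gapEnd_apply_length.trans hf.symm).le
  · exact (gapEnd_apply_of_gt hn).trans_le (Bool.false_le _)

theorem gapEnd_false_lt_gapEnd_true (s : List Bool) : gapEnd s false < gapEnd s true := by
  refine ⟨s.length, fun n hn => ?_, ?_⟩
  · exact (gapEnd_apply_of_lt hn).trans (gapEnd_apply_of_lt hn).symm
  · exact gapEnd_apply_length.trans_lt (Bool.false_lt_true.trans_eq gapEnd_apply_length.symm)

theorem eq_length_of_gapEnd_apply_lt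
    (h : ofLex (gapEnd s false) n < ofLex (gapEnd s true) n) : n = s.length := by
  rcases lt_trichotomy n s.length with hn | hn | hn
  · rw [gapEnd_apply_of_lt hn, gapEnd_apply_of_lt hn] at h
    exact absurd h (lt_irrefl _)
  · exact hn
  · rw [gapEnd_apply_of_gt hn, gapEnd_apply_of_gt hn] at h
    exact absurd h (by decide)

theorem gapEnd_covBy (s : List Bool) : gapEnd s false ⋖ gapEnd s true := by
  refine ⟨gapEnd_false_lt_gapEnd_true s, ?_⟩
  rintro f ⟨n, hn, hfn⟩ ⟨m, hm, hfm⟩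
  rcases lt_trichotomy n m with h | rfl | h
  · obtain rfl := eq_length_of_gapEnd_apply_lt (hfn.trans_eq (hm n h))
    exact Bool.false_ne_true ((gapEnd_apply_of_gt h).symm.trans (Bool.lt_iff.1 hfm).2)
  · exact Bool.false_ne_true ((Bool.lt_iff.1 hfm).1.symm.trans (Bool.lt_iff.1 hfn).2)
  · obtain rfl := eq_length_of_gapEnd_apply_lt ((hn m h).trans_lt hfm)
    exact Bool.false_ne_true ((Bool.lt_iff.1 hfn).1.symm.trans (gapEnd_apply_of_gt h))

theorem exists_eq_gapEnd_of_covBy {f f' : Lex (ℕ → Bool)} (h : f ⋖ f') :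
    ∃ s, f = gapEnd s false ∧ f' = gapEnd s true := by
  obtain ⟨n, hlt, hn⟩ := h.lt
  obtain ⟨hf, hf'⟩ := Bool.lt_iff.1 hn
  let s := List.ofFn fun k : Fin n => ofLex f k
  have hlen : s.length = n := List.length_ofFn
  have hle : f ≤ gapEnd s false := le_gapEnd_false (by simp [s]) (by rwa [hlen])
  have hle' : gapEnd s true ≤ f' := gapEnd_true_le
    (fun k hk => by simpa [s] using (hlt k (hlen ▸ hk)).symm) (by rwa [hlen])
  have hgap := gapEnd_false_lt_gapEnd_true s
  refine ⟨s, ?_, ?_⟩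
  · exact hle.eq_of_not_lt fun hlt => h.2 hlt (hgap.trans_le hle')
  · exact (hle'.eq_of_not_lt fun hlt => h.2 (hle.trans_lt hgap) hlt).symm

theorem bot_lt_gapEnd_false (s : List Bool) : ⊥ < gapEnd s false := by
  refine bot_lt_iff_ne_bot.2 fun h => Bool.false_ne_true ?_
  exact (congrFun h (s.length + 1)).symm.trans (gapEnd_apply_of_gt (Nat.lt_succ_self _))

theorem gapEnd_true_lt_top (s : List Bool) : gapEnd s true < ⊤ := by
  refine lt_top_iff_ne_top.2 fun h => Bool.false_ne_true ?_
  exact (gapEnd_apply_of_gt (Nat.lt_succ_self _)).symm.trans (congrFun h (s.length + 1))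

end GapEnd

theorem preimage_inter_range_eq_image {X α β : Type*} {F : X → α} {G : β → α} {x : β → X}
    (hx : ∀ b, F (x b) = G b) (I : Set α) : F ⁻¹' I ∩ range x = x '' (G ⁻¹' I) := by
  rw [inter_comm, ← image_preimage_eq_range_inter, ← preimage_comp, funext (f := F ∘ x) hx]

section Monotone

variable {X α β : Type*} [LinearOrder α] [LinearOrder β] {F : X → α} {G : β → α} {x : β → X}
  {a b c d : β}

theorem disjoint_Icc_of_covBy (hG : StrictMono G) (hab : a ⋖ b) (hcd : c ⋖ d)
    (hac : a ≠ c) (hbc : b ≠ c) (hda : d ≠ a) :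
    Disjoint (Icc (G a) (G b)) (Icc (G c) (G d)) := by
  refine disjoint_left.2 fun y hy hy' => ?_
  rcases hac.lt_or_gt with h | h
  · exact (hy.2.trans_lt (hG ((hab.ge_of_gt h).lt_of_ne hbc))).not_ge hy'.1
  · exact (hy'.2.trans_lt (hG ((hcd.ge_of_gt h).lt_of_ne hda))).not_ge hy.1

theorem exists_covBy_mem_Icc_of_isCompact_range [TopologicalSpace α] [OrderClosedTopology α]
    (hG : StrictMono G) (hc : IsCompact (range G)) {y : α} (ha : G a ≤ y) (hb : y ≤ G b)
    (hy : y ∉ range G) : ∃ c d, c ⋖ d ∧ y ∈ Icc (G c) (G d) := by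
  obtain ⟨_, ⟨⟨c, rfl⟩, hcy⟩, hcmax⟩ :=
    (hc.inter_right isClosed_Iic).exists_isGreatest ⟨G a, ⟨a, rfl⟩, ha⟩
  obtain ⟨_, ⟨⟨d, rfl⟩, hdy⟩, hdmin⟩ :=
    (hc.inter_right isClosed_Ici).exists_isLeast ⟨G b, ⟨b, rfl⟩, hb⟩
  have hcd : G c < G d := (hcy.lt_of_ne fun h => hy ⟨c, h⟩).trans_le hdy
  refine ⟨c, d, ⟨hG.lt_iff_lt.1 hcd, fun e hce hed => ?_⟩, hcy, hdy⟩
  rcases le_total (G e) y with h | h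
  · exact (hG hce).not_ge (hcmax ⟨⟨e, rfl⟩, h⟩)
  · exact (hG hed).not_ge (hdmin ⟨⟨e, rfl⟩, h⟩)

theorem preimage_Iic_bot_inter_range [OrderBot β] (hG : StrictMono G)
    (hx : ∀ b, F (x b) = G b) : F ⁻¹' Iic (G ⊥) ∩ range x = {x ⊥} := by
  have : G ⁻¹' Iic (G ⊥) = {⊥} := by
    ext b
    simp [hG.le_iff_le]
  rw [preimage_inter_range_eq_image hx, this, image_singleton]

theorem preimage_Ici_top_inter_range [OrderTop β] (hG : StrictMono G)
    (hx : ∀ b, F (x b) = G b) : F ⁻¹' Ici (G ⊤) ∩ range x = {x ⊤} :=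
  preimage_Iic_bot_inter_range (α := αᵒᵈ) (β := βᵒᵈ) hG.dual hx

theorem preimage_Icc_inter_range_of_covBy (hG : StrictMono G) (hx : ∀ b, F (x b) = G b)
    (hab : a ⋖ b) : F ⁻¹' Icc (G a) (G b) ∩ range x = {x a, x b} := by
  have : G ⁻¹' Icc (G a) (G b) = {a, b} := by
    rw [← hab.Icc_eq]
    ext c
    simp [hG.le_iff_le]
  rw [preimage_inter_range_eq_image hx, this, image_pair]

end Monotone

theorem continuous_of_preimage_singleton_eq {X Y Z : Type*} [TopologicalSpace X]
    [TopologicalSpace Y] [TopologicalSpace Z] {F : X → Z} {G : Y → Z} {x : Y → X}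
    (hF : IsClosedMap F) (hG : Continuous G) (hx : ∀ y, F ⁻¹' {G y} = {x y}) : Continuous x := by
  refine continuous_iff_isClosed.2 fun C hC => ?_
  have : x ⁻¹' C = G ⁻¹' (F '' C) := by
    ext y
    refine ⟨fun hy => ⟨x y, hy, (hx y).ge rfl⟩, fun ⟨z, hz, hzy⟩ => ?_⟩
    obtain rfl : z = x y := (hx y).le hzy
    exact hz
  exact this ▸ (hF C hC).preimage hG

section Fiber

variable {X α : Type*} [TopologicalSpace X]

/-- `M` is a nondegenerate locally connected continuum; in a metrizable space this says that `M`
is a nondegenerate Peano continuum. -/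
def IsNondegeneratePeano (M : Set X) : Prop :=
  IsCompact M ∧ IsConnected M ∧ M.Nontrivial ∧ LocallyConnectedSpace M

theorem IsRetract.isNondegeneratePeano [CompactSpace X] [ConnectedSpace X]
    [LocallyConnectedSpace X] {M : Set X} (hM : IsRetract M) (h : M.Nontrivial) :
    IsNondegeneratePeano M :=
  ⟨hM.isCompact, hM.isConnected, h, hM.locallyConnectedSpace⟩

variable [LinearOrder α] [TopologicalSpace α] [OrderTopology α] {F : X → α} {s t : α} {a b : X}

theorem IsRetract.inter_preimage_Iic {M : Set X} (hM : IsRetract M) (hF : Continuous F)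
    (hb : F ⁻¹' {t} = {b}) (hbM : b ∈ M) : IsRetract (M ∩ F ⁻¹' Iic t) := by
  have hfrontier : frontier (F ⁻¹' Iic t) ⊆ {b} :=
    (hF.frontier_preimage_subset _).trans (hb ▸ preimage_mono (frontier_Iic_subset t))
  have hbt : F b = t := hb.ge rfl
  exact hM.inter hfrontier ⟨hbM, hbt.le⟩

theorem IsRetract.inter_preimage_Ici {M : Set X} (hM : IsRetract M) (hF : Continuous F)
    (ha : F ⁻¹' {s} = {a}) (haM : a ∈ M) : IsRetract (M ∩ F ⁻¹' Ici s) :=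
  hM.inter_preimage_Iic (F := OrderDual.toDual ∘ F) (t := OrderDual.toDual s) hF ha haM

section IsNondegeneratePeano

variable [CompactSpace X] [ConnectedSpace X] [LocallyConnectedSpace X]

theorem isNondegeneratePeano_preimage_Iic (hF : Continuous F) (hb : F ⁻¹' {t} = {b})
    (hlt : ∃ y, F y < t) : IsNondegeneratePeano (F ⁻¹' Iic t) := by
  have hbt : F b = t := hb.ge rfl
  obtain ⟨y, hy⟩ := hlt
  rw [← univ_inter (F ⁻¹' Iic t)]
  refine (isRetract_univ.inter_preimage_Iic hF hb (mem_univ b)).isNondegeneratePeano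
    ⟨y, ⟨mem_univ y, hy.le⟩, b, ⟨mem_univ b, hbt.le⟩, ?_⟩
  rintro rfl
  exact hy.ne hbt

theorem isNondegeneratePeano_preimage_Ici (hF : Continuous F) (ha : F ⁻¹' {s} = {a})
    (hgt : ∃ y, s < F y) : IsNondegeneratePeano (F ⁻¹' Ici s) :=
  isNondegeneratePeano_preimage_Iic (F := OrderDual.toDual ∘ F) (t := OrderDual.toDual s) hF ha hgt

theorem isNondegeneratePeano_preimage_Icc (hF : Continuous F) (hst : s < t)
    (ha : F ⁻¹' {s} = {a}) (hb : F ⁻¹' {t} = {b}) : IsNondegeneratePeano (F ⁻¹' Icc s t) := by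
  have has : F a = s := ha.ge rfl
  have hbt : F b = t := hb.ge rfl
  have hbs : b ∈ F ⁻¹' Ici s := hst.le.trans_eq hbt.symm
  have hretract := (isRetract_univ.inter_preimage_Ici hF ha (mem_univ a)).inter_preimage_Iic hF hb
    ⟨mem_univ b, hbs⟩
  rw [univ_inter, ← preimage_inter, Ici_inter_Iic] at hretract
  refine hretract.isNondegeneratePeano
    ⟨a, ⟨has.ge, has.trans_le hst.le⟩, b, ⟨hbs, hbt.le⟩, ?_⟩
  rintro rfl
  exact hst.ne (has.symm.trans hbt)

end IsNondegeneratePeano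

end Fiber

section CantorFamily

variable {X α : Type*} [LinearOrder α] {F : X → α} {G : Lex (ℕ → Bool) → α}
  {x : Lex (ℕ → Bool) → X}

theorem exists_homeomorph_range [TopologicalSpace X] [T2Space X]
    (hcont : Continuous fun f => x (toLex f)) (hinj : Function.Injective x) :
    ∃ h : (ℕ → Bool) ≃ₜ range x, ∀ f, (h f : X) = x (toLex f) := by
  rw [← toLex.surjective.range_comp x]
  exact ⟨(hcont.isClosedEmbedding (hinj.comp toLex.injective)).isEmbedding.toHomeomorph,
    fun _ => rfl⟩

theorem disjoint_Icc_gapEnd (hG : StrictMono G) {s t : List Bool} (hst : s ≠ t) :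
    Disjoint (Icc (G (gapEnd s false)) (G (gapEnd s true)))
      (Icc (G (gapEnd t false)) (G (gapEnd t true))) :=
  disjoint_Icc_of_covBy hG (gapEnd_covBy s) (gapEnd_covBy t)
    (fun h => hst (gapEnd_injective2 h).1)
    (fun h => Bool.false_ne_true (gapEnd_injective2 h).2.symm)
    (fun h => Bool.false_ne_true (gapEnd_injective2 h).2.symm)

theorem union_preimage_eq_univ [TopologicalSpace α] [OrderClosedTopology α]
    (hG : StrictMono G) (hGc : Continuous fun f => G (toLex f)) (hx : ∀ f, F ⁻¹' {G f} = {x f}) :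
    F ⁻¹' Iic (G ⊥) ∪ F ⁻¹' Ici (G ⊤) ∪ range x ∪
      ⋃ s, F ⁻¹' Icc (G (gapEnd s false)) (G (gapEnd s true)) = univ := by
  have hcompact : IsCompact (range G) :=
    toLex.surjective.range_comp G ▸ isCompact_range hGc
  refine eq_univ_of_forall fun y => ?_
  by_cases hbot : F y ≤ G ⊥
  · exact Or.inl (Or.inl (Or.inl hbot))
  by_cases htop : G ⊤ ≤ F y
  · exact Or.inl (Or.inl (Or.inr htop))
  by_cases hy : F y ∈ range G
  · obtain ⟨f, hf⟩ := hy
    exact Or.inl (Or.inr ⟨f, ((hx f).le hf.symm).symm⟩)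
  · obtain ⟨f, f', hcov, hmem⟩ := exists_covBy_mem_Icc_of_isCompact_range hG hcompact
      (not_le.1 hbot).le (not_le.1 htop).le hy
    obtain ⟨s, rfl, rfl⟩ := exists_eq_gapEnd_of_covBy hcov
    exact Or.inr (mem_iUnion.2 ⟨s, hmem⟩)

end CantorFamily

theorem structure_of_peano_continuum_with_uncountably_many_cut_points_general
    {X : Type*} [TopologicalSpace X] [T2Space X] [SeparableSpace X] [CompactSpace X]
    [ConnectedSpace X] [LocallyConnectedSpace X] (hcut : ¬ {x : X | IsCutPoint x}.Countable) :
    ∃ (L R : Set X) (Xs : List Bool → Set X) (l r : X) (ls rs : List Bool → X)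
      (C : Set X) (h : (ℕ → Bool) ≃ₜ C),
      IsNondegeneratePeano L ∧ IsNondegeneratePeano R ∧ (∀ s, IsNondegeneratePeano (Xs s)) ∧
      Disjoint L R ∧ (∀ s, Disjoint L (Xs s)) ∧ (∀ s, Disjoint R (Xs s)) ∧
      (∀ s t, s ≠ t → Disjoint (Xs s) (Xs t)) ∧
      L ∩ C = {l} ∧ R ∩ C = {r} ∧ (∀ s, Xs s ∩ C = {ls s, rs s}) ∧
      ((h fun _ => false : C) : X) = l ∧ ((h fun _ => true : C) : X) = r ∧
      (∀ s, ((h (catSeq (s ++ [true]) fun _ => false) : C) : X) = rs s) ∧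
      (∀ s, ((h (catSeq (s ++ [false]) fun _ => true) : C) : X) = ls s) ∧
      L ∪ R ∪ C ∪ (⋃ s, Xs s) = Set.univ := by
  obtain ⟨φ, hφ⟩ := PointSeparation.exists_strictMono_real (X := X)
  obtain ⟨𝒮, h𝒮, hchain⟩ := PointSeparation.exists_uncountable_isChain hcut
  obtain ⟨S, hS⟩ := exists_strictMono_rat_of_isChain hchain h𝒮 hφ
  obtain ⟨D, hD, hfiber⟩ := PointSeparation.exists_countable_fiber_height_eq_singleton hS
  obtain ⟨g, hg, hgcont, hgD⟩ := exists_strictMono_continuous_forall_notMem hD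
  let F := PointSeparation.height S
  let G (f : Lex (ℕ → Bool)) : EReal := g f
  have hF : Continuous F := PointSeparation.continuous_height hS
  have hG : StrictMono G := EReal.coe_strictMono.comp hg
  have hGcont : Continuous fun f => G (toLex f) := continuous_coe_real_ereal.comp hgcont
  choose x hx using fun f => hfiber (g f) (hgD f)
  have hFx : ∀ f, F (x f) = G f := fun f => (hx f).ge rfl
  obtain ⟨h, hh⟩ := exists_homeomorph_range
    (continuous_of_preimage_singleton_eq hF.isClosedMap hGcont fun f => hx (toLex f))
    (Function.Injective.of_comp (funext (f := F ∘ x) hFx ▸ hG.injective))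
  refine ⟨F ⁻¹' Iic (G ⊥), F ⁻¹' Ici (G ⊤),
    fun s => F ⁻¹' Icc (G (gapEnd s false)) (G (gapEnd s true)), x ⊥, x ⊤,
    fun s => x (gapEnd s false), fun s => x (gapEnd s true), range x, h,
    isNondegeneratePeano_preimage_Iic hF (hx ⊥) (PointSeparation.exists_height_lt hS _),
    isNondegeneratePeano_preimage_Ici hF (hx ⊤) (PointSeparation.exists_lt_height hS _),
    fun s => isNondegeneratePeano_preimage_Icc hF (hG (gapEnd_covBy s).lt) (hx _) (hx _),
    (Iic_disjoint_Ici.2 (hG bot_lt_top).not_ge).preimage F,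
    fun s => ?_, fun s => ?_, fun s t hst => (disjoint_Icc_gapEnd hG hst).preimage F,
    preimage_Iic_bot_inter_range hG hFx, preimage_Ici_top_inter_range hG hFx,
    fun s => preimage_Icc_inter_range_of_covBy hG hFx (gapEnd_covBy s),
    hh _, hh _, fun s => hh _, fun s => hh _, union_preimage_eq_univ hG hGcont hx⟩
  · exact ((Iic_disjoint_Ici.2 (hG (bot_lt_gapEnd_false s)).not_ge).preimage F).mono_right
      (preimage_mono Icc_subset_Ici_self)
  · exact ((Iic_disjoint_Ici.2 (hG (gapEnd_true_lt_top s)).not_ge).preimage F).symm.mono_right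
      (preimage_mono Icc_subset_Iic_self)

/-- Structure proposition: a Peano continuum with uncountably many cut points decomposes
as `L ∪ R ∪ C ∪ ⋃_s X_s` where `C` is a Cantor set, `L, R, X_s` are pairwise disjoint
nondegenerate Peano subcontinua meeting `C` in the prescribed points. -/
theorem structure_of_peano_continuum_with_uncountably_many_cut_points
    {X : Type*} [MetricSpace X] [CompactSpace X] [ConnectedSpace X]
    [LocallyConnectedSpace X] [Nonempty X]
    (hcut : ¬ ({x : X | IsCutPoint x}).Countable) :
    ∃ (L R : Set X) (Xs : List Bool → Set X) (l r : X) (ls rs : List Bool → X)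
      (C : Set X) (h : (ℕ → Bool) ≃ₜ C),
      -- L, R, X_s are nondegenerate Peano subcontinua
      (IsCompact L ∧ IsConnected L ∧ L.Nontrivial ∧ LocallyConnectedSpace L) ∧
      (IsCompact R ∧ IsConnected R ∧ R.Nontrivial ∧ LocallyConnectedSpace R) ∧
      (∀ s, IsCompact (Xs s) ∧ IsConnected (Xs s) ∧ (Xs s).Nontrivial ∧
        LocallyConnectedSpace (Xs s)) ∧
      -- pairwise disjointness
      Disjoint L R ∧ (∀ s, Disjoint L (Xs s)) ∧ (∀ s, Disjoint R (Xs s)) ∧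
      (∀ s t, s ≠ t → Disjoint (Xs s) (Xs t)) ∧
      -- intersections with the Cantor set C
      L ∩ C = {l} ∧ R ∩ C = {r} ∧ (∀ s, Xs s ∩ C = {ls s, rs s}) ∧
      -- the homeomorphism h sends the prescribed sequences to the prescribed points
      ((h fun _ => false : C) : X) = l ∧ ((h fun _ => true : C) : X) = r ∧
      (∀ s, ((h (catSeq (s ++ [true]) fun _ => false) : C) : X) = rs s) ∧
      (∀ s, ((h (catSeq (s ++ [false]) fun _ => true) : C) : X) = ls s) ∧
      -- the decomposition of X
      L ∪ R ∪ C ∪ (⋃ s, Xs s) = Set.univ :=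
  structure_of_peano_continuum_with_uncountably_many_cut_points_general hcut
end

section
/- Let X be a Peano continuum, let S be a simple closed curve (a space homeomorphic to the circle), and let p : X → S be a continuous surjection such that only countably many points of S have a preimage containing more than one point. Then for every ε > 0 there is a finite set K ⊆ S such that diam p^{-1}(L) < ε for every connected component L of S \ K. -/
/-!
Fix `y ∈ S` and an arc leaving `y`. If the preimages of its initial segments clustered at two
distinct points, then, `X` being locally connected, these would have disjoint connected
neighbourhoods whose images both contain an initial segment, so uncountably many fibres would be
nondegenerate. Hence they cluster at one point at most, and by compactness a sufficiently short arc
leaving `y` has a small preimage. Finitely many pairs of such arcs cover the image of `p`, and a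
connected set avoiding all their endpoints lies in a single arc if it meets the image.
-/

open Set Filter Topology

section Preconnected

variable {S α : Type*} [TopologicalSpace S] [T2Space S] [LinearOrder α] [TopologicalSpace α]
  [OrderClosedTopology α]

lemma subset_image_Ioo_of_isPreconnected [CompactIccSpace α] {γ : α → S} (hγ : Continuous γ)
    (hγ_open : IsOpenMap γ) {C : Set S} (hC : IsPreconnected C) {a b : α} (ha : γ a ∉ C)
    (hb : γ b ∉ C) (hmeet : (C ∩ γ '' Ioo a b).Nonempty) : C ⊆ γ '' Ioo a b := by
  refine hC.subset_of_closure_inter_subset (hγ_open _ isOpen_Ioo) hmeet ?_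
  rintro y ⟨hy, hyC⟩
  obtain ⟨t, ⟨hat, htb⟩, rfl⟩ : y ∈ γ '' Icc a b :=
    closure_minimal (image_mono Ioo_subset_Icc_self) (isCompact_Icc.image hγ).isClosed hy
  exact ⟨t, ⟨hat.lt_of_ne (by rintro rfl; exact ha hyC),
    htb.lt_of_ne (by rintro rfl; exact hb hyC)⟩, rfl⟩

lemma map_nhdsGT_le_map_nhds_of_clusterPt {X : Type*} [TopologicalSpace X]
    [LocallyConnectedSpace X] {p : X → S} (hp : Continuous p) {γ : α → S} (hγ : IsOpenEmbedding γ)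
    {a : α} {z : X} (hz : ClusterPt z (comap p (map γ (𝓝[>] a)))) :
    map γ (𝓝[>] a) ≤ map p (𝓝 z) := by
  have hpz : p z = γ a := by
    have hcluster : ClusterPt (p z) (map γ (𝓝[>] a)) := hz.map hp.continuousAt tendsto_comap
    exact eq_of_nhds_neBot
      (hcluster.mono ((hγ.continuous.tendsto a).mono_left nhdsWithin_le_nhds))
  intro O hO
  have hrange : p ⁻¹' range γ ∈ 𝓝 z :=
    hp.continuousAt.preimage_mem_nhds (hpz ▸ hγ.isOpen_range.mem_nhds (mem_range_self a))
  obtain ⟨V, hVsub, hVopen, hzV, hVconn⟩ :=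
    locallyConnectedSpace_iff_subsets_isOpen_isConnected.1 ‹_› z _ (inter_mem hO hrange)
  have hconn : IsPreconnected (γ ⁻¹' (p '' V)) :=
    (hVconn.isPreconnected.image p hp.continuousOn).preimage_of_isOpenMap hγ.injective
      hγ.isOpenMap (image_subset_iff.2 fun x hx => (hVsub hx).2)
  have ha : a ∈ γ ⁻¹' (p '' V) := ⟨z, hzV, hpz⟩
  obtain ⟨w, hwV, t, hat, htw⟩ := clusterPt_iff_nonempty.1 hz (hVopen.mem_nhds hzV)
    (preimage_mem_comap (image_mem_map self_mem_nhdsWithin))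
  refine mem_map.2 (mem_of_superset (Ioc_mem_nhdsGT hat) fun s hs => ?_)
  obtain ⟨v, hvV, hvs⟩ := hconn.Icc_subset ha ⟨w, hwV, htw.symm⟩ (Ioc_subset_Icc_self hs)
  rw [mem_preimage, ← hvs]
  exact (hVsub hvV).1

end Preconnected

lemma clusterPt_comap_subsingleton_of_countable {X S : Type*} [TopologicalSpace X] [T2Space X]
    {p : X → S} (hcount : {y | (p ⁻¹' {y}).Nontrivial}.Countable) {G : Filter S}
    (hG : ∀ s ∈ G, ¬s.Countable) (hmap : ∀ z, ClusterPt z (comap p G) → G ≤ map p (𝓝 z)) :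
    {z | ClusterPt z (comap p G)}.Subsingleton := by
  intro z hz w hw
  by_contra hne
  obtain ⟨V, W, hV, hW, hzV, hwW, hVW⟩ := t2_separation hne
  have himage : p '' V ∩ p '' W ∈ G :=
    inter_mem (hmap z hz (image_mem_map (hV.mem_nhds hzV)))
      (hmap w hw (image_mem_map (hW.mem_nhds hwW)))
  refine hG _ himage (hcount.mono ?_)
  rintro y ⟨⟨v, hv, hvy⟩, u, hu, huy⟩
  exact ⟨v, hvy, u, huy, hVW.ne_of_mem hv hu⟩

lemma exists_mem_diam_lt_of_clusterPt_subsingleton {X : Type*} [PseudoMetricSpace X]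
    [CompactSpace X] {F : Filter X} (hF : {z | ClusterPt z F}.Subsingleton) {ε : ℝ} (hε : 0 < ε) :
    ∃ s ∈ F, Metric.diam s < ε := by
  rcases F.eq_or_neBot with rfl | hne
  · exact ⟨∅, mem_bot, by simpa using hε⟩
  · obtain ⟨x, hx⟩ := exists_clusterPt_of_compactSpace F
    have hle : F ≤ 𝓝 x := le_nhds_of_unique_clusterPt fun y hy => hF hy hx
    refine ⟨Metric.ball x (ε / 3), hle (Metric.ball_mem_nhds x (by positivity)), ?_⟩
    linarith [Metric.diam_ball (x := x) (r := ε / 3) (by positivity)]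

lemma not_countable_of_mem_map_nhdsGT {S : Type*} {γ : ℝ → S} (hγ : Function.Injective γ) {a : ℝ}
    {s : Set S} (hs : s ∈ map γ (𝓝[>] a)) : ¬s.Countable := by
  intro hcount
  obtain ⟨b, hab, hb⟩ := mem_nhdsGT_iff_exists_Ioo_subset.1 (mem_map.1 hs)
  exact (Cardinal.Real.Ioo_countable_iff.1 ((hcount.preimage hγ).mono hb)).not_gt hab

/-- A finite set of points of `S` can be removed so that every preconnected set which avoids them
and meets `U` has a preimage of diameter less than `ε`. The restriction to sets meeting `U` makes
the property local, so that compactness of the image of `p` applies. -/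
def HasFiniteCut {X S : Type*} [PseudoMetricSpace X] [TopologicalSpace S] (p : X → S) (ε : ℝ)
    (U : Set S) : Prop :=
  ∃ K : Set S, K.Finite ∧ ∀ C, IsPreconnected C → Disjoint C K → (C ∩ U).Nonempty →
    Metric.diam (p ⁻¹' C) < ε

namespace HasFiniteCut

variable {X S : Type*} [PseudoMetricSpace X] [TopologicalSpace S] {p : X → S} {ε : ℝ} {U V : Set S}

lemma empty : HasFiniteCut p ε ∅ := ⟨∅, by simp⟩

lemma mono (hUV : U ⊆ V) (hV : HasFiniteCut p ε V) : HasFiniteCut p ε U := by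
  obtain ⟨K, hK, hsmall⟩ := hV
  exact ⟨K, hK, fun C hC hCK hCU => hsmall C hC hCK (hCU.mono (inter_subset_inter_right C hUV))⟩

lemma union (hU : HasFiniteCut p ε U) (hV : HasFiniteCut p ε V) : HasFiniteCut p ε (U ∪ V) := by
  obtain ⟨K, hK, hKsmall⟩ := hU
  obtain ⟨L, hL, hLsmall⟩ := hV
  refine ⟨K ∪ L, hK.union hL, fun C hC hCKL hCUV => ?_⟩
  obtain ⟨hCK, hCL⟩ := disjoint_union_right.1 hCKL
  rw [inter_union_distrib_left, union_nonempty] at hCUV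
  exact hCUV.elim (hKsmall C hC hCK) (hLsmall C hC hCL)

lemma of_isCompact (hU : IsCompact U) (hloc : ∀ y ∈ U, ∃ V ∈ 𝓝 y, HasFiniteCut p ε V) :
    HasFiniteCut p ε U :=
  hU.induction_on empty (fun _ _ => mono) (fun _ _ => union) fun y hy =>
    let ⟨V, hV, hcut⟩ := hloc y hy
    ⟨V, mem_nhdsWithin_of_mem_nhds hV, hcut⟩

lemma exists_finset_connectedComponentIn (hp : HasFiniteCut p ε (range p)) (hε : 0 < ε) :
    ∃ K : Finset S, ∀ y ∈ (K : Set S)ᶜ,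
      Metric.diam (p ⁻¹' connectedComponentIn (K : Set S)ᶜ y) < ε := by
  obtain ⟨K, hK, hsmall⟩ := hp
  refine ⟨hK.toFinset, fun y _ => ?_⟩
  rw [hK.coe_toFinset]
  rcases (connectedComponentIn Kᶜ y ∩ range p).eq_empty_or_nonempty with hempty | hmeet
  · simpa [preimage_eq_empty_iff.2 (disjoint_iff_inter_eq_empty.2 hempty)] using hε
  · exact hsmall _ isPreconnected_connectedComponentIn
      (disjoint_left.2 (connectedComponentIn_subset Kᶜ y)) hmeet

end HasFiniteCut

lemma exists_isOpenEmbedding_of_isLocalHomeomorph {E S : Type*} [SeminormedAddCommGroup E]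
    [NormedSpace ℝ E] [TopologicalSpace S] {f : E → S} (hf : IsLocalHomeomorph f) (x : E) :
    ∃ γ : E → S, IsOpenEmbedding γ ∧ f x ∈ range γ := by
  obtain ⟨e, hx, rfl⟩ := hf x
  obtain ⟨r, hr, hball⟩ := Metric.isOpen_iff.1 e.open_source x hx
  let u : OpenPartialHomeomorph E E := OpenPartialHomeomorph.univBall x r
  have hu : ∀ v, u v ∈ Metric.ball x r := fun v => by
    rw [← OpenPartialHomeomorph.univBall_target x hr]
    exact u.map_source (by simp [u])
  have hsource : (u.trans e).source = univ :=
    eq_univ_of_forall fun v => by simpa [u] using hball (hu v)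
  exact ⟨u.trans e, (u.trans e).isOpenEmbedding hsource, 0, by simp [u]⟩

lemma exists_isOpenEmbedding_real_of_homeomorph_addCircle {S : Type*} [TopologicalSpace S]
    {T : ℝ} (h : S ≃ₜ AddCircle T) (y : S) : ∃ γ : ℝ → S, IsOpenEmbedding γ ∧ y ∈ range γ := by
  obtain ⟨t, ht⟩ := QuotientAddGroup.mk_surjective (h y)
  obtain ⟨γ, hγ, s, hs⟩ :=
    exists_isOpenEmbedding_of_isLocalHomeomorph (AddCircle.isLocalHomeomorph_coe T) t
  exact ⟨h.symm ∘ γ, h.symm.isOpenEmbedding.comp hγ, s, by simp [hs, ht]⟩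

section Arcs

variable {X S : Type*} [MetricSpace X] [CompactSpace X] [LocallyConnectedSpace X]
  [TopologicalSpace S] [T2Space S] {p : X → S} {γ : ℝ → S} {ε : ℝ}

lemma exists_gt_diam_preimage_image_Ioo_lt (hp : Continuous p)
    (hcount : {y | (p ⁻¹' {y}).Nontrivial}.Countable) (hγ : IsOpenEmbedding γ) (a : ℝ)
    (hε : 0 < ε) : ∃ b > a, Metric.diam (p ⁻¹' (γ '' Ioo a b)) < ε := by
  obtain ⟨s, ⟨T, hT, hTs⟩, hsε⟩ := exists_mem_diam_lt_of_clusterPt_subsingleton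
    (clusterPt_comap_subsingleton_of_countable hcount
      (fun _ => not_countable_of_mem_map_nhdsGT (a := a) hγ.injective)
      fun _ => map_nhdsGT_le_map_nhds_of_clusterPt hp hγ) hε
  obtain ⟨b, hab, hb⟩ := mem_nhdsGT_iff_exists_Ioo_subset.1 (mem_map.1 hT)
  have hsub : p ⁻¹' (γ '' Ioo a b) ⊆ s := (preimage_mono (image_subset_iff.2 hb)).trans hTs
  exact ⟨b, hab, (Metric.diam_mono hsub Metric.isBounded_of_compactSpace).trans_lt hsε⟩

lemma exists_lt_diam_preimage_image_Ioo_lt (hp : Continuous p)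
    (hcount : {y | (p ⁻¹' {y}).Nontrivial}.Countable) (hγ : IsOpenEmbedding γ) (a : ℝ)
    (hε : 0 < ε) : ∃ b < a, Metric.diam (p ⁻¹' (γ '' Ioo b a)) < ε := by
  obtain ⟨b, hab, hb⟩ := exists_gt_diam_preimage_image_Ioo_lt hp hcount
    (hγ.comp (Homeomorph.neg ℝ).isOpenEmbedding) (-a) hε
  refine ⟨-b, neg_lt.1 hab, ?_⟩
  simpa [image_comp] using hb

lemma exists_mem_nhds_hasFiniteCut (hp : Continuous p)
    (hcount : {y | (p ⁻¹' {y}).Nontrivial}.Countable) (hγ : IsOpenEmbedding γ) (a : ℝ)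
    (hε : 0 < ε) : ∃ U ∈ 𝓝 (γ a), HasFiniteCut p ε U := by
  obtain ⟨r, har, hr⟩ := exists_gt_diam_preimage_image_Ioo_lt hp hcount hγ a hε
  obtain ⟨l, hla, hl⟩ := exists_lt_diam_preimage_image_Ioo_lt hp hcount hγ a hε
  refine ⟨γ '' Ioo l r, hγ.isOpenMap.image_mem_nhds (Ioo_mem_nhds hla har),
    {γ l, γ a, γ r}, by simp, ?_⟩
  rintro C hC hCK ⟨_, hyC, t, ht, rfl⟩
  obtain ⟨hlC, haC, hrC⟩ : γ l ∉ C ∧ γ a ∉ C ∧ γ r ∉ C := by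
    simpa [disjoint_right] using hCK
  have hsmall {b c : ℝ} (hb : γ b ∉ C) (hc : γ c ∉ C) (htbc : t ∈ Ioo b c)
      (hbc : Metric.diam (p ⁻¹' (γ '' Ioo b c)) < ε) : Metric.diam (p ⁻¹' C) < ε := by
    have hsub := subset_image_Ioo_of_isPreconnected hγ.continuous hγ.isOpenMap hC hb hc
      ⟨γ t, hyC, mem_image_of_mem γ htbc⟩
    exact (Metric.diam_mono (preimage_mono hsub) Metric.isBounded_of_compactSpace).trans_lt hbc
  rcases lt_trichotomy t a with hta | rfl | hat
  · exact hsmall hlC haC ⟨ht.1, hta⟩ hl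
  · exact absurd hyC haC
  · exact hsmall haC hrC ⟨hat, ht.2⟩ hr

theorem exists_finite_set_with_small_preimages_of_components_general
    (hS : ∀ y : S, ∃ γ : ℝ → S, IsOpenEmbedding γ ∧ y ∈ range γ) (hp : Continuous p)
    (hcount : {y | (p ⁻¹' {y}).Nontrivial}.Countable) (hε : 0 < ε) :
    ∃ K : Finset S, ∀ y ∈ (K : Set S)ᶜ,
      Metric.diam (p ⁻¹' connectedComponentIn (K : Set S)ᶜ y) < ε := by
  refine (HasFiniteCut.of_isCompact (isCompact_range hp) fun y _ => ?_)
    |>.exists_finset_connectedComponentIn hε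
  obtain ⟨γ, hγ, a, rfl⟩ := hS y
  exact exists_mem_nhds_hasFiniteCut hp hcount hγ a hε

end Arcs

/-- Let `p : X → S` be a continuous surjection from a Peano continuum onto a simple
closed curve such that only countably many points of `S` have nondegenerate preimage.
Then for every `ε > 0` there is a finite set `K ⊆ S` such that the preimage of every
connected component of `S \ K` has diameter less than `ε`. -/
theorem exists_finite_set_with_small_preimages_of_components
    {X : Type*} [MetricSpace X] [CompactSpace X] [ConnectedSpace X]
    [LocallyConnectedSpace X] [Nonempty X]
    {S : Type*} [TopologicalSpace S] (hS : Nonempty (S ≃ₜ AddCircle (1 : ℝ)))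
    (p : X → S) (hp : Continuous p) (hsurj : Function.Surjective p)
    (hcount : ({y : S | (p ⁻¹' {y}).Nontrivial}).Countable)
    (ε : ℝ) (hε : 0 < ε) :
    ∃ K : Finset S, ∀ y ∈ ((K : Set S))ᶜ,
      Metric.diam (p ⁻¹' connectedComponentIn ((K : Set S))ᶜ y) < ε := by
  obtain ⟨h⟩ := hS
  have : T2Space S := h.symm.t2Space
  exact exists_finite_set_with_small_preimages_of_components_general
    (exists_isOpenEmbedding_real_of_homeomorph_addCircle h) hp hcount hε
end
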